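/- arXiv:1310.3480 — 2 statements merged into one kernel-verified Lean document; each statement's English description precedes it below -/
import Mathlib

section
/- Let x ≥ 2 and y ≥ 1. Let P₁ = e₁B(x,y) and P₂ = e₂B(x,y) be the indecomposable projective right B(x,y)-modules, and let f : P₁ → P₂^{⊕x} be the homomorphism whose p-th component is left multiplication by the arrow α_p. Then T = coker(f) ⊕ P₂ is a tilting module over B(x,y): T has projective dimension at most 1, Ext¹_{B(x,y)}(T, T) = 0, and there exists a short exact sequence 0 → B(x,y) → T⁰ → T¹ → 0 of right B(x,y)-modules in which T⁰ and T¹ are finite direct sums of direct summands of T. -/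
/-!
The paths `e₁`, `e₂`, `α_p`, `β_q`, `α_p β_q` span `B = B(x,y)` (`span_pathSet`), so `P₁ = e₁B`
is spanned by `e₁` and the `β_q`, and `e₂Be₁` is spanned by the `α_p`.

* The map `f` is injective: left multiplication by a single `α_p` is already injective on `P₁`,
  because `α_p` and the `α_p β_q` are linearly independent, as three-dimensional
  representations show (`eq_zero_of_Ba_mul_eq_zero`). Hence
  `0 → P₁ → P₂^{⊕x} ⊕ P₂ → T → 0`, with first map `(f, 0)`, is a projective resolution of `T`.
* A homomorphism `P₁ → P₂` is left multiplication by an element of `e₂Be₁`, that is, by a linear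
  combination of the `α_p`; so it factors through `f` (`exists_factor_P2`). A homomorphism
  `P₁ → T` lifts to `P₂^{⊕x} ⊕ P₂` since `P₁` is projective, so it also factors through `f`
  (`exists_extension`). Therefore `Ext¹(T, T) = 0` by the resolution above. Mathlib's `Ext` is
  computed from an arbitrary projective resolution, and `cocycle_extends` compares the two.
* Adding the identity of `P₂` to `0 → P₁ → P₂^{⊕x} → coker(f) → 0` gives the coresolution
  `0 → B → P₂^{⊕x} ⊕ P₂ → coker(f) → 0`.
-/

/-!
Statement 3: for `x ≥ 2`, `y ≥ 1`, with `P₁ = e₁B(x,y)`, `P₂ = e₂B(x,y)` and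
`f : P₁ → P₂^{⊕x}` the map whose `p`-th component is left multiplication by `α_p`,
the module `T = coker(f) ⊕ P₂` is a tilting module over `B(x,y)`:
`T` has projective dimension at most 1, `Ext¹(T,T) = 0`, and there is a short exact
sequence `0 → B(x,y) → T⁰ → T¹ → 0` with `T⁰`, `T¹` finite direct sums of direct
summands of `T`.
-/

noncomputable section
set_option linter.unusedSectionVars false

open CategoryTheory

/-- The generators of the path algebra of the quiver `Q(x,y)`: the two trivial paths
`e₁`, `e₂`, the `x` arrows `a p : 1 → 2` and the `y` arrows `b q : 2 → 1`. -/
inductive BGen (x y : ℕ) : Type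
  | e1 : BGen x y
  | e2 : BGen x y
  | a (p : Fin x) : BGen x y
  | b (q : Fin y) : BGen x y

/-- The relations defining `B(x,y)` as a quotient of the free algebra on `BGen x y`:
the path algebra relations for the quiver `Q(x,y)` (products are written in composition
order: `u * v` means "first traverse `v`, then `u`") together with the relations
`β_q * α_p = 0` killing all length-two paths traversing first some `α_p`, then some `β_q`. -/
inductive BRel (k : Type) [Field k] (x y : ℕ) :
    FreeAlgebra k (BGen x y) → FreeAlgebra k (BGen x y) → Prop
  | idem1 : BRel k x y (FreeAlgebra.ι k BGen.e1 * FreeAlgebra.ι k BGen.e1)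
      (FreeAlgebra.ι k BGen.e1)
  | idem2 : BRel k x y (FreeAlgebra.ι k BGen.e2 * FreeAlgebra.ι k BGen.e2)
      (FreeAlgebra.ι k BGen.e2)
  | orth12 : BRel k x y (FreeAlgebra.ι k BGen.e1 * FreeAlgebra.ι k BGen.e2) 0
  | orth21 : BRel k x y (FreeAlgebra.ι k BGen.e2 * FreeAlgebra.ι k BGen.e1) 0
  | sum : BRel k x y (FreeAlgebra.ι k BGen.e1 + FreeAlgebra.ι k BGen.e2) 1
  | a_tgt (p : Fin x) : BRel k x y (FreeAlgebra.ι k BGen.e2 * FreeAlgebra.ι k (BGen.a p))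
      (FreeAlgebra.ι k (BGen.a p))
  | a_src (p : Fin x) : BRel k x y (FreeAlgebra.ι k (BGen.a p) * FreeAlgebra.ι k BGen.e1)
      (FreeAlgebra.ι k (BGen.a p))
  | b_tgt (q : Fin y) : BRel k x y (FreeAlgebra.ι k BGen.e1 * FreeAlgebra.ι k (BGen.b q))
      (FreeAlgebra.ι k (BGen.b q))
  | b_src (q : Fin y) : BRel k x y (FreeAlgebra.ι k (BGen.b q) * FreeAlgebra.ι k BGen.e2)
      (FreeAlgebra.ι k (BGen.b q))
  | ba (p : Fin x) (q : Fin y) :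
      BRel k x y (FreeAlgebra.ι k (BGen.b q) * FreeAlgebra.ι k (BGen.a p)) 0

/-- The quasi-hereditary algebra `B(x,y)`: the path algebra of the quiver `Q(x,y)`
modulo the ideal generated by the paths `β_q α_p`. -/
def BAlgebra (k : Type) [Field k] (x y : ℕ) : Type := RingQuot (BRel k x y)

instance (k : Type) [Field k] (x y : ℕ) : Ring (BAlgebra k x y) :=
  inferInstanceAs (Ring (RingQuot (BRel k x y)))

instance (k : Type) [Field k] (x y : ℕ) : Algebra k (BAlgebra k x y) :=
  inferInstanceAs (Algebra k (RingQuot (BRel k x y)))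

variable (k : Type) [Field k] (x y : ℕ)

/-- The idempotent `e₁ ∈ B(x,y)`. -/
def Be1 : BAlgebra k x y := RingQuot.mkAlgHom k (BRel k x y) (FreeAlgebra.ι k BGen.e1)

/-- The idempotent `e₂ ∈ B(x,y)`. -/
def Be2 : BAlgebra k x y := RingQuot.mkAlgHom k (BRel k x y) (FreeAlgebra.ι k BGen.e2)

/-- The arrow `α_p ∈ B(x,y)`. -/
def Ba (p : Fin x) : BAlgebra k x y := RingQuot.mkAlgHom k (BRel k x y) (FreeAlgebra.ι k (BGen.a p))

/-- The arrow `β_q ∈ B(x,y)`. -/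
def Bb (q : Fin y) : BAlgebra k x y := RingQuot.mkAlgHom k (BRel k x y) (FreeAlgebra.ι k (BGen.b q))
section TiltingDefs

variable (k : Type) [Field k] (x y : ℕ)

/-- The right submodule `uB = {z | u z = z}` of `B(x,y)` generated by an idempotent `u`
(for `u = e₁, e₂` these are the indecomposable projective right modules `P₁`, `P₂`). -/
def projAt (u : BAlgebra k x y) : Submodule (BAlgebra k x y)ᵐᵒᵖ (BAlgebra k x y) where
  carrier := {z | u * z = z}
  add_mem' := fun {a b} ha hb => by
    show u * (a + b) = a + b
    rw [mul_add, show u * a = a from ha, show u * b = b from hb]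
  zero_mem' := mul_zero u
  smul_mem' := fun c {z} hz => by
    show u * (z * c.unop) = z * c.unop
    rw [← mul_assoc, show u * z = z from hz]

/-- The indecomposable projective right `B(x,y)`-module `P₁ = e₁B(x,y)`. -/
def P1 : Submodule (BAlgebra k x y)ᵐᵒᵖ (BAlgebra k x y) := projAt k x y (Be1 k x y)

/-- The indecomposable projective right `B(x,y)`-module `P₂ = e₂B(x,y)`. -/
def P2 : Submodule (BAlgebra k x y)ᵐᵒᵖ (BAlgebra k x y) := projAt k x y (Be2 k x y)

lemma Be2_mul_Ba (p : Fin x) : Be2 k x y * Ba k x y p = Ba k x y p := by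
  have h := RingQuot.mkAlgHom_rel k (BRel.a_tgt (k := k) (x := x) (y := y) p)
  rw [map_mul] at h
  exact h

/-- The homomorphism `f : P₁ → P₂^{⊕x}` whose `p`-th component is left multiplication
by the arrow `α_p`. -/
def tiltf : P1 k x y →ₗ[(BAlgebra k x y)ᵐᵒᵖ] (Fin x → P2 k x y) where
  toFun z := fun p => ⟨Ba k x y p * (z : BAlgebra k x y), by
    show Be2 k x y * (Ba k x y p * (z : BAlgebra k x y)) = Ba k x y p * (z : BAlgebra k x y)
    rw [← mul_assoc, Be2_mul_Ba]⟩
  map_add' z w := by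
    funext p
    apply Subtype.ext
    show Ba k x y p * ((z : BAlgebra k x y) + (w : BAlgebra k x y)) = _ + _
    rw [mul_add]
  map_smul' c z := by
    funext p
    apply Subtype.ext
    show Ba k x y p * ((z : BAlgebra k x y) * c.unop) = (Ba k x y p * (z : BAlgebra k x y)) * c.unop
    rw [mul_assoc]

/-- The tilting module `T = coker(f) ⊕ P₂` over `B(x,y)`. -/
def TiltingT : Type :=
  ((Fin x → P2 k x y) ⧸ LinearMap.range (tiltf k x y)) × P2 k x y

instance : AddCommGroup (TiltingT k x y) :=
  inferInstanceAs (AddCommGroup ((((Fin x → P2 k x y) ⧸ LinearMap.range (tiltf k x y))) × P2 k x y))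

instance : Module (BAlgebra k x y)ᵐᵒᵖ (TiltingT k x y) :=
  inferInstanceAs
    (Module (BAlgebra k x y)ᵐᵒᵖ ((((Fin x → P2 k x y) ⧸ LinearMap.range (tiltf k x y))) × P2 k x y))

/-- `X` is (isomorphic to) a direct summand of a finite direct sum of copies of `T`;
equivalently, `X` is a finite direct sum of direct summands of `T` (up to isomorphism,
in the additive category of modules). -/
def IsSummandOfFinSums (R T X : Type) [Ring R] [AddCommGroup T] [Module R T]
    [AddCommGroup X] [Module R X] : Prop :=
  ∃ (n : ℕ) (ι : X →ₗ[R] (Fin n → T)) (π : (Fin n → T) →ₗ[R] X), π.comp ι = LinearMap.id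

end TiltingDefs

/-! ### Multiplication table and spanning paths of `B(x,y)` -/

section Relations

variable {k : Type} [Field k] {x y : ℕ}

lemma Be1_Be1 : Be1 k x y * Be1 k x y = Be1 k x y := by
  have h := RingQuot.mkAlgHom_rel k (BRel.idem1 (k := k) (x := x) (y := y))
  rw [map_mul] at h
  exact h

lemma Be2_Be2 : Be2 k x y * Be2 k x y = Be2 k x y := by
  have h := RingQuot.mkAlgHom_rel k (BRel.idem2 (k := k) (x := x) (y := y))
  rw [map_mul] at h
  exact h

lemma Be1_Be2 : Be1 k x y * Be2 k x y = 0 := by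
  have h := RingQuot.mkAlgHom_rel k (BRel.orth12 (k := k) (x := x) (y := y))
  rw [map_mul, map_zero] at h
  exact h

lemma Be2_Be1 : Be2 k x y * Be1 k x y = 0 := by
  have h := RingQuot.mkAlgHom_rel k (BRel.orth21 (k := k) (x := x) (y := y))
  rw [map_mul, map_zero] at h
  exact h

lemma Be1_add_Be2 : Be1 k x y + Be2 k x y = 1 := by
  have h := RingQuot.mkAlgHom_rel k (BRel.sum (k := k) (x := x) (y := y))
  rw [map_add, map_one] at h
  exact h

lemma Ba_Be1 (p : Fin x) : Ba k x y p * Be1 k x y = Ba k x y p := by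
  have h := RingQuot.mkAlgHom_rel k (BRel.a_src (k := k) (x := x) (y := y) p)
  rw [map_mul] at h
  exact h

lemma Be1_Bb (q : Fin y) : Be1 k x y * Bb k x y q = Bb k x y q := by
  have h := RingQuot.mkAlgHom_rel k (BRel.b_tgt (k := k) (x := x) (y := y) q)
  rw [map_mul] at h
  exact h

lemma Bb_Be2 (q : Fin y) : Bb k x y q * Be2 k x y = Bb k x y q := by
  have h := RingQuot.mkAlgHom_rel k (BRel.b_src (k := k) (x := x) (y := y) q)
  rw [map_mul] at h
  exact h

lemma Bb_Ba (p : Fin x) (q : Fin y) : Bb k x y q * Ba k x y p = 0 := by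
  have h := RingQuot.mkAlgHom_rel k (BRel.ba (k := k) (x := x) (y := y) p q)
  rw [map_mul, map_zero] at h
  exact h

lemma Be1_Ba (p : Fin x) : Be1 k x y * Ba k x y p = 0 := by
  rw [← Be2_mul_Ba, ← mul_assoc, Be1_Be2, zero_mul]

lemma Ba_Be2 (p : Fin x) : Ba k x y p * Be2 k x y = 0 := by
  rw [← Ba_Be1, mul_assoc, Be1_Be2, mul_zero]

lemma Be2_Bb (q : Fin y) : Be2 k x y * Bb k x y q = 0 := by
  rw [← Be1_Bb, ← mul_assoc, Be2_Be1, zero_mul]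

lemma Bb_Be1 (q : Fin y) : Bb k x y q * Be1 k x y = 0 := by
  rw [← Bb_Be2, mul_assoc, Be2_Be1, mul_zero]

lemma Ba_Ba (p p' : Fin x) : Ba k x y p * Ba k x y p' = 0 := by
  rw [← Ba_Be1, mul_assoc, Be1_Ba, mul_zero]

lemma Bb_Bb (q q' : Fin y) : Bb k x y q * Bb k x y q' = 0 := by
  rw [← Bb_Be2, mul_assoc, Be2_Bb, mul_zero]

variable (k x y) in
/-- The nonzero paths of `Q(x,y)` modulo the relations `β_q α_p = 0`. -/
def pathSet : Set (BAlgebra k x y) :=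
  {z | z = Be1 k x y ∨ z = Be2 k x y ∨ (∃ p, z = Ba k x y p) ∨ (∃ q, z = Bb k x y q) ∨
    ∃ p q, z = Ba k x y p * Bb k x y q}

lemma Be1_mem : Be1 k x y ∈ Submodule.span k (pathSet k x y) :=
  Submodule.subset_span (Or.inl rfl)

lemma Be2_mem : Be2 k x y ∈ Submodule.span k (pathSet k x y) :=
  Submodule.subset_span (Or.inr (Or.inl rfl))

lemma Ba_mem (p : Fin x) : Ba k x y p ∈ Submodule.span k (pathSet k x y) :=
  Submodule.subset_span (Or.inr (Or.inr (Or.inl ⟨p, rfl⟩)))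

lemma Bb_mem (q : Fin y) : Bb k x y q ∈ Submodule.span k (pathSet k x y) :=
  Submodule.subset_span (Or.inr (Or.inr (Or.inr (Or.inl ⟨q, rfl⟩))))

lemma Ba_Bb_mem (p : Fin x) (q : Fin y) :
    Ba k x y p * Bb k x y q ∈ Submodule.span k (pathSet k x y) :=
  Submodule.subset_span (Or.inr (Or.inr (Or.inr (Or.inr ⟨p, q, rfl⟩))))

variable (k x y) in
/-- The quotient map from the free algebra on the generators to `B(x,y)`. -/
def toB : FreeAlgebra k (BGen x y) →ₐ[k] BAlgebra k x y := RingQuot.mkAlgHom k (BRel k x y)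

/-- Left multiplication by a generator sends each path to a path or to zero. -/
lemma gen_mul_path_mem (g : BGen x y) {z : BAlgebra k x y} (hz : z ∈ pathSet k x y) :
    toB k x y (FreeAlgebra.ι k g) * z ∈
      Submodule.span k (pathSet k x y) := by
  cases g with
  | e1 =>
    change Be1 k x y * z ∈ _
    rcases hz with rfl | rfl | ⟨p, rfl⟩ | ⟨q, rfl⟩ | ⟨p, q, rfl⟩ <;>
      simp [← mul_assoc, Be1_Be1, Be1_Be2, Be1_Ba, Be1_Bb, Be1_mem, Bb_mem]
  | e2 =>
    change Be2 k x y * z ∈ _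
    rcases hz with rfl | rfl | ⟨p, rfl⟩ | ⟨q, rfl⟩ | ⟨p, q, rfl⟩ <;>
      simp [← mul_assoc, Be2_Be1, Be2_Be2, Be2_mul_Ba, Be2_Bb, Be2_mem, Ba_mem, Ba_Bb_mem]
  | a p' =>
    change Ba k x y p' * z ∈ _
    rcases hz with rfl | rfl | ⟨p, rfl⟩ | ⟨q, rfl⟩ | ⟨p, q, rfl⟩ <;>
      simp [← mul_assoc, Ba_Be1, Ba_Be2, Ba_Ba, Ba_mem, Ba_Bb_mem]
  | b q' =>
    change Bb k x y q' * z ∈ _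
    rcases hz with rfl | rfl | ⟨p, rfl⟩ | ⟨q, rfl⟩ | ⟨p, q, rfl⟩ <;>
      simp [← mul_assoc, Bb_Be1, Bb_Be2, Bb_Ba, Bb_Bb, Bb_mem]

/-- The paths span `B(x,y)`: their span contains `1 = e₁ + e₂` and is stable under left
multiplication by the generators. -/
lemma span_pathSet (z : BAlgebra k x y) : z ∈ Submodule.span k (pathSet k x y) := by
  suffices h : ∀ w : FreeAlgebra k (BGen x y), ∀ z ∈ Submodule.span k (pathSet k x y),
      toB k x y w * z ∈ Submodule.span k (pathSet k x y) by
    obtain ⟨w, rfl⟩ := RingQuot.mkAlgHom_surjective k (BRel k x y) z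
    have h1 : (1 : BAlgebra k x y) ∈ Submodule.span k (pathSet k x y) := by
      rw [← Be1_add_Be2]
      exact add_mem Be1_mem Be2_mem
    have := h w 1 h1
    rwa [mul_one] at this
  intro w
  induction w using FreeAlgebra.induction with
  | grade0 r =>
    intro z hz
    rw [AlgHom.commutes]
    have := Submodule.smul_mem _ r hz
    rwa [Algebra.smul_def] at this
  | grade1 g =>
    intro z hz
    induction hz using Submodule.span_induction with
    | mem z hz => exact gen_mul_path_mem g hz
    | zero => rw [mul_zero]; exact zero_mem _
    | add u v _ _ hu hv => rw [mul_add]; exact add_mem hu hv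
    | smul c u _ hu => rw [mul_smul_comm]; exact Submodule.smul_mem _ c hu
  | mul u v hu hv =>
    intro z hz
    rw [map_mul, mul_assoc]
    exact hu _ (hv z hz)
  | add u v hu hv =>
    intro z hz
    rw [map_add, add_mul]
    exact add_mem (hu z hz) (hv z hz)

/-- `e₁B` is spanned by `e₁` and the arrows `β_q`. -/
lemma Be1_mul_eq (z : BAlgebra k x y) : ∃ (c : k) (d : Fin y → k),
    Be1 k x y * z = c • Be1 k x y + ∑ q, d q • Bb k x y q := by
  suffices h : Be1 k x y * z ∈
      Submodule.span k (insert (Be1 k x y) (Set.range (Bb k x y))) by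
    obtain ⟨c, w, hw, h⟩ := Submodule.mem_span_insert.1 h
    obtain ⟨d, rfl⟩ := (Submodule.mem_span_range_iff_exists_fun k).1 hw
    exact ⟨c, d, h⟩
  induction span_pathSet z using Submodule.span_induction with
  | mem z hz =>
    rcases hz with rfl | rfl | ⟨p, rfl⟩ | ⟨q, rfl⟩ | ⟨p, q, rfl⟩
    · rw [Be1_Be1]; exact Submodule.subset_span (Or.inl rfl)
    · rw [Be1_Be2]; exact zero_mem _
    · rw [Be1_Ba]; exact zero_mem _
    · rw [Be1_Bb]; exact Submodule.subset_span (Or.inr ⟨q, rfl⟩)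
    · rw [← mul_assoc, Be1_Ba, zero_mul]; exact zero_mem _
  | zero => rw [mul_zero]; exact zero_mem _
  | add u v _ _ hu hv => rw [mul_add]; exact add_mem hu hv
  | smul c u _ hu => rw [mul_smul_comm]; exact Submodule.smul_mem _ c hu

/-- `e₂Be₁` is spanned by the arrows `α_p`. -/
lemma Be2_mul_mul_Be1_eq (z : BAlgebra k x y) : ∃ c : Fin x → k,
    Be2 k x y * z * Be1 k x y = ∑ p, c p • Ba k x y p := by
  suffices h : Be2 k x y * z * Be1 k x y ∈ Submodule.span k (Set.range (Ba k x y)) by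
    obtain ⟨c, h⟩ := (Submodule.mem_span_range_iff_exists_fun k).1 h
    exact ⟨c, h.symm⟩
  induction span_pathSet z using Submodule.span_induction with
  | mem z hz =>
    rcases hz with rfl | rfl | ⟨p, rfl⟩ | ⟨q, rfl⟩ | ⟨p, q, rfl⟩
    · rw [Be2_Be1, zero_mul]; exact zero_mem _
    · rw [Be2_Be2, Be2_Be1]; exact zero_mem _
    · rw [Be2_mul_Ba, Ba_Be1]; exact Submodule.subset_span ⟨p, rfl⟩
    · rw [Be2_Bb, zero_mul]; exact zero_mem _
    · rw [mul_assoc, mul_assoc, Bb_Be1, mul_zero, mul_zero]; exact zero_mem _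
  | zero => rw [mul_zero, zero_mul]; exact zero_mem _
  | add u v _ _ hu hv => rw [mul_add, add_mul]; exact add_mem hu hv
  | smul c u _ hu =>
    rw [mul_smul_comm, smul_mul_assoc]; exact Submodule.smul_mem _ c hu

end Relations

/-! ### A representation separating `α_p` and the paths `α_p β_q` -/

section Representation

variable {k : Type} [Field k] {x y : ℕ}

/-- The values on generators of a three-dimensional representation of `B(x,y)`: the basis
vector `1` sits at vertex `1`, the basis vectors `0` and `2` at vertex `2`; every `α_p` acts
as the matrix unit `E₀₁` and `β_q` as `l q • E₁₂`. -/
def repGen (l : Fin y → k) : BGen x y → Matrix (Fin 3) (Fin 3) k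
  | .e1 => !![0, 0, 0; 0, 1, 0; 0, 0, 0]
  | .e2 => !![1, 0, 0; 0, 0, 0; 0, 0, 1]
  | .a _ => !![0, 1, 0; 0, 0, 0; 0, 0, 0]
  | .b q => !![0, 0, 0; 0, 0, l q; 0, 0, 0]

/-- The three-dimensional representation of `B(x,y)` with generator matrices `repGen l`. -/
def rep (l : Fin y → k) : BAlgebra k x y →ₐ[k] Matrix (Fin 3) (Fin 3) k :=
  RingQuot.liftAlgHom k ⟨FreeAlgebra.lift k (repGen l), by
    intro u v h
    cases h <;>
      simp only [map_mul, map_add, map_zero, map_one, FreeAlgebra.lift_ι_apply, repGen] <;>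
      ext i j <;> fin_cases i <;> fin_cases j <;>
      simp [Matrix.mul_apply, Fin.sum_univ_three]⟩

lemma rep_gen (l : Fin y → k) (g : BGen x y) :
    rep l (toB k x y (FreeAlgebra.ι k g)) = repGen l g :=
  (RingQuot.liftAlgHom_mkAlgHom_apply k _ _ _).trans (FreeAlgebra.lift_ι_apply _ _)

/-- Left multiplication by an arrow `α_p` is injective on `e₁B`: the representations `rep l`
separate `α_p` and the paths `α_p β_q`. -/
lemma eq_zero_of_Ba_mul_eq_zero (p : Fin x) {z : BAlgebra k x y} (hz : Be1 k x y * z = z)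
    (h : Ba k x y p * z = 0) : z = 0 := by
  obtain ⟨c, d, hcd⟩ := Be1_mul_eq z
  rw [hz] at hcd
  have ha (l : Fin y → k) : rep l (Ba k x y p) = repGen (x := x) l (.a p) := rep_gen l _
  have he (l : Fin y → k) : rep l (Be1 k x y) = repGen (x := x) l .e1 := rep_gen l _
  have hb (l : Fin y → k) (q) : rep l (Bb k x y q) = repGen (x := x) l (.b q) := rep_gen l _
  have key (l : Fin y → k) := congrArg (rep l) h
  simp only [hcd, map_mul, map_add, map_sum, map_smul, map_zero, ha, he, hb, repGen] at key
  have hc : c = 0 := by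
    have := congrFun (congrFun (key 0) 0) 1
    simpa [Matrix.mul_apply, Fin.sum_univ_three, Matrix.sum_apply] using this
  have hd (q : Fin y) : d q = 0 := by
    have := congrFun (congrFun (key (Pi.single q 1)) 0) 2
    simpa [Matrix.mul_apply, Fin.sum_univ_three, Matrix.sum_apply, Pi.single_apply] using this
  simp [hcd, hc, hd]

end Representation

/-! ### Projective modules, resolution and coresolution -/

section Modules

variable {k : Type} [Field k] {x y : ℕ}

/-- Left multiplication by `u`, as an endomorphism of the right module `B(x,y)`. -/
def lmul (u : BAlgebra k x y) : BAlgebra k x y →ₗ[(BAlgebra k x y)ᵐᵒᵖ] BAlgebra k x y where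
  toFun z := u * z
  map_add' := mul_add u
  map_smul' c z := (mul_assoc u z c.unop).symm

variable (k x y) in
/-- The projection `B → e₁B`, `z ↦ e₁z`. -/
def pr1 : BAlgebra k x y →ₗ[(BAlgebra k x y)ᵐᵒᵖ] P1 k x y :=
  (lmul (Be1 k x y)).codRestrict _ fun z => by
    change Be1 k x y * (Be1 k x y * z) = Be1 k x y * z
    rw [← mul_assoc, Be1_Be1]

variable (k x y) in
/-- The projection `B → e₂B`, `z ↦ e₂z`. -/
def pr2 : BAlgebra k x y →ₗ[(BAlgebra k x y)ᵐᵒᵖ] P2 k x y :=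
  (lmul (Be2 k x y)).codRestrict _ fun z => by
    change Be2 k x y * (Be2 k x y * z) = Be2 k x y * z
    rw [← mul_assoc, Be2_Be2]

lemma coe_pr1 (z : BAlgebra k x y) : (pr1 k x y z : BAlgebra k x y) = Be1 k x y * z := rfl

lemma coe_pr2 (z : BAlgebra k x y) : (pr2 k x y z : BAlgebra k x y) = Be2 k x y * z := rfl

lemma coe_tiltf (z : P1 k x y) (p : Fin x) :
    (tiltf k x y z p : BAlgebra k x y) = Ba k x y p * z := rfl

lemma Be1_mul_P1 (z : P1 k x y) : Be1 k x y * (z : BAlgebra k x y) = z := z.2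

lemma Be2_mul_P2 (z : P2 k x y) : Be2 k x y * (z : BAlgebra k x y) = z := z.2

lemma pr1_P1 (z : P1 k x y) : pr1 k x y z = z := Subtype.ext (Be1_mul_P1 z)

lemma pr2_P2 (z : P2 k x y) : pr2 k x y z = z := Subtype.ext (Be2_mul_P2 z)

lemma pr1_P2 (z : P2 k x y) : pr1 k x y z = 0 := by
  apply Subtype.ext
  rw [coe_pr1, ← Be2_mul_P2 z, ← mul_assoc, Be1_Be2, zero_mul]
  rfl

lemma pr2_P1 (z : P1 k x y) : pr2 k x y z = 0 := by
  apply Subtype.ext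
  rw [coe_pr2, ← Be1_mul_P1 z, ← mul_assoc, Be2_Be1, zero_mul]
  rfl

instance projective_BAlgebra :
    Module.Projective (BAlgebra k x y)ᵐᵒᵖ (BAlgebra k x y) :=
  Module.Projective.of_equiv (MulOpposite.opLinearEquiv (BAlgebra k x y)ᵐᵒᵖ).symm

instance projective_P1 : Module.Projective (BAlgebra k x y)ᵐᵒᵖ (P1 k x y) :=
  Module.Projective.of_split (P1 k x y).subtype (pr1 k x y) (LinearMap.ext pr1_P1)

instance projective_P2 : Module.Projective (BAlgebra k x y)ᵐᵒᵖ (P2 k x y) :=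
  Module.Projective.of_split (P2 k x y).subtype (pr2 k x y) (LinearMap.ext pr2_P2)

instance projective_P2_pow : Module.Projective (BAlgebra k x y)ᵐᵒᵖ (Fin x → P2 k x y) :=
  Module.Projective.of_equiv' DFinsupp.linearEquivFunOnFintype

lemma tiltf_injective (hx : 0 < x) : Function.Injective (tiltf k x y) := by
  rw [← LinearMap.ker_eq_bot, LinearMap.ker_eq_bot']
  intro z hz
  apply Subtype.ext
  have h := congrArg Subtype.val (congrFun hz ⟨0, hx⟩)
  exact eq_zero_of_Ba_mul_eq_zero _ z.2 h

/-- Every homomorphism `P₁ → P₂` is left multiplication by a linear combination of the `α_p`,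
hence factors through `f`. -/
lemma exists_factor_P2 (χ : P1 k x y →ₗ[(BAlgebra k x y)ᵐᵒᵖ] P2 k x y) :
    ∃ e : (Fin x → P2 k x y) →ₗ[(BAlgebra k x y)ᵐᵒᵖ] P2 k x y, e ∘ₗ tiltf k x y = χ := by
  let ε : P1 k x y := ⟨Be1 k x y, Be1_Be1⟩
  have hχ (z : P1 k x y) : (χ z : BAlgebra k x y) = χ ε * z := by
    have hz : z = MulOpposite.op (z : BAlgebra k x y) • ε := Subtype.ext (Be1_mul_P1 z).symm
    conv_lhs => rw [hz, map_smul]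
    rfl
  obtain ⟨c, hc⟩ := Be2_mul_mul_Be1_eq (χ ε : BAlgebra k x y)
  have hε : (χ ε : BAlgebra k x y) = ∑ p, c p • Ba k x y p := by
    rw [← hc, Be2_mul_P2]
    exact hχ ε
  refine ⟨pr2 k x y ∘ₗ ∑ p, lmul (algebraMap k _ (c p)) ∘ₗ (P2 k x y).subtype ∘ₗ
    LinearMap.proj p, ?_⟩
  ext z
  have h1 : (∑ p, lmul (algebraMap k (BAlgebra k x y) (c p)) ∘ₗ (P2 k x y).subtype ∘ₗ
      LinearMap.proj p) (tiltf k x y z) = (χ z : BAlgebra k x y) := by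
    rw [hχ, hε, Finset.sum_mul, LinearMap.sum_apply]
    refine Finset.sum_congr rfl fun p _ => ?_
    rw [smul_mul_assoc, Algebra.smul_def]
    rfl
  rw [LinearMap.comp_apply, LinearMap.comp_apply, h1, pr2_P2]

variable (k x y) in
/-- The canonical surjection `P₂^{⊕x} ⊕ P₂ → coker(f) ⊕ P₂ = T`. -/
def toT : ((Fin x → P2 k x y) × P2 k x y) →ₗ[(BAlgebra k x y)ᵐᵒᵖ] TiltingT k x y :=
  LinearMap.prodMap (LinearMap.range (tiltf k x y)).mkQ LinearMap.id

lemma toT_surjective : Function.Surjective (toT k x y) := by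
  rintro ⟨u, v⟩
  obtain ⟨u, rfl⟩ := Submodule.mkQ_surjective _ u
  exact ⟨(u, v), rfl⟩

lemma toT_eq_zero_iff (w : (Fin x → P2 k x y) × P2 k x y) :
    toT k x y w = 0 ↔ w.1 ∈ LinearMap.range (tiltf k x y) ∧ w.2 = 0 := by
  rw [← Submodule.Quotient.mk_eq_zero]
  exact Prod.ext_iff

variable (k x y) in
/-- The map `P₁ → P₂^{⊕x} ⊕ P₂` with components `f` and `0`; it is the first term of the
projective resolution of `T`. -/
def resMap : P1 k x y →ₗ[(BAlgebra k x y)ᵐᵒᵖ] ((Fin x → P2 k x y) × P2 k x y) :=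
  LinearMap.inl _ _ _ ∘ₗ tiltf k x y

lemma resMap_injective (hx : 0 < x) : Function.Injective (resMap k x y) :=
  LinearMap.inl_injective.comp (tiltf_injective hx)

lemma resMap_exact : Function.Exact (resMap k x y) (toT k x y) := by
  rintro ⟨u, v⟩
  rw [toT_eq_zero_iff]
  constructor
  · rintro ⟨⟨z, hz⟩, hv⟩
    exact ⟨z, Prod.ext hz hv.symm⟩
  · rintro ⟨z, hz⟩
    exact ⟨⟨z, congrArg Prod.fst hz⟩, (congrArg Prod.snd hz).symm⟩

/-- Every homomorphism `P₁ → T` extends along the resolution map: it lifts to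
`P₂^{⊕x} ⊕ P₂` because `P₁` is projective, and each component of the lift factors
through `f`. -/
lemma exists_extension (φ : P1 k x y →ₗ[(BAlgebra k x y)ᵐᵒᵖ] TiltingT k x y) :
    ∃ e : ((Fin x → P2 k x y) × P2 k x y) →ₗ[(BAlgebra k x y)ᵐᵒᵖ] TiltingT k x y,
      e ∘ₗ resMap k x y = φ := by
  obtain ⟨ψ, hψ⟩ := Module.projective_lifting_property (toT k x y) φ toT_surjective
  choose e he using fun p : Fin x =>
    exists_factor_P2 (LinearMap.proj p ∘ₗ LinearMap.fst _ _ _ ∘ₗ ψ)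
  obtain ⟨e', he'⟩ := exists_factor_P2 (LinearMap.snd _ _ _ ∘ₗ ψ)
  refine ⟨toT k x y ∘ₗ (LinearMap.pi e).prod e' ∘ₗ LinearMap.fst _ _ _, ?_⟩
  rw [← hψ]
  refine LinearMap.ext fun z => congrArg (toT k x y) (Prod.ext (funext fun p => ?_) ?_)
  · exact LinearMap.congr_fun (he p) z
  · exact LinearMap.congr_fun he' z

lemma isSummand_P2_pow_prod : IsSummandOfFinSums (BAlgebra k x y)ᵐᵒᵖ (TiltingT k x y)
    ((Fin x → P2 k x y) × P2 k x y) := by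
  let j : P2 k x y →ₗ[(BAlgebra k x y)ᵐᵒᵖ] TiltingT k x y :=
    toT k x y ∘ₗ LinearMap.inr _ _ _
  let r : TiltingT k x y →ₗ[(BAlgebra k x y)ᵐᵒᵖ] P2 k x y := LinearMap.snd _ _ _
  let s : Fin (x + 1) →
      ((Fin x → P2 k x y) × P2 k x y) →ₗ[(BAlgebra k x y)ᵐᵒᵖ] TiltingT k x y :=
    Fin.lastCases (j ∘ₗ LinearMap.snd _ _ _)
      fun p => j ∘ₗ LinearMap.proj p ∘ₗ LinearMap.fst _ _ _
  have hs_castSucc (p : Fin x) :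
      s p.castSucc = j ∘ₗ LinearMap.proj p ∘ₗ LinearMap.fst _ _ _ := Fin.lastCases_castSucc _
  have hs_last : s (Fin.last x) = j ∘ₗ LinearMap.snd _ _ _ := Fin.lastCases_last
  refine ⟨x + 1, LinearMap.pi s,
    (LinearMap.pi fun p => r ∘ₗ LinearMap.proj p.castSucc).prod
      (r ∘ₗ LinearMap.proj (Fin.last x)), ?_⟩
  refine LinearMap.ext fun w => Prod.ext (funext fun p => ?_) ?_
  · change r (s p.castSucc w) = w.1 p
    rw [hs_castSucc]
    rfl
  · change r (s (Fin.last x) w) = w.2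
    rw [hs_last]
    rfl

lemma isSummand_coker : IsSummandOfFinSums (BAlgebra k x y)ᵐᵒᵖ (TiltingT k x y)
    ((Fin x → P2 k x y) ⧸ LinearMap.range (tiltf k x y)) := by
  let j : ((Fin x → P2 k x y) ⧸ LinearMap.range (tiltf k x y))
      →ₗ[(BAlgebra k x y)ᵐᵒᵖ] TiltingT k x y := LinearMap.inl _ _ _
  let r : TiltingT k x y →ₗ[(BAlgebra k x y)ᵐᵒᵖ]
      ((Fin x → P2 k x y) ⧸ LinearMap.range (tiltf k x y)) := LinearMap.fst _ _ _
  exact ⟨1, LinearMap.pi fun _ => j, r ∘ₗ LinearMap.proj 0, LinearMap.ext fun _ => rfl⟩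

variable (k x y) in
/-- The coresolution map `B → P₂^{⊕x} ⊕ P₂`, `z ↦ (f(e₁z), e₂z)`; under `B = P₁ ⊕ P₂` it is
`f ⊕ id`. -/
def coresMap : BAlgebra k x y →ₗ[(BAlgebra k x y)ᵐᵒᵖ] ((Fin x → P2 k x y) × P2 k x y) :=
  (tiltf k x y ∘ₗ pr1 k x y).prod (pr2 k x y)

lemma coresMap_injective (hx : 0 < x) : Function.Injective (coresMap k x y) := by
  rw [← LinearMap.ker_eq_bot, LinearMap.ker_eq_bot']
  intro z hz
  have h1 : pr1 k x y z = 0 := by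
    apply tiltf_injective hx
    rw [map_zero]
    exact congrArg Prod.fst hz
  have h2 : pr2 k x y z = 0 := congrArg Prod.snd hz
  have h1' : Be1 k x y * z = 0 := congrArg Subtype.val h1
  have h2' : Be2 k x y * z = 0 := congrArg Subtype.val h2
  rw [← one_mul z, ← Be1_add_Be2, add_mul, h1', h2', add_zero]

/-- A preimage of `(f(w), v)` under `coresMap` is `w + v`, because `e₁v = 0` and `e₂w = 0`. -/
lemma coresMap_exact : Function.Exact (coresMap k x y)
    ((LinearMap.range (tiltf k x y)).mkQ ∘ₗ
      LinearMap.fst (BAlgebra k x y)ᵐᵒᵖ (Fin x → P2 k x y) (P2 k x y)) := by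
  rintro ⟨u, v⟩
  rw [LinearMap.comp_apply, Submodule.mkQ_apply, Submodule.Quotient.mk_eq_zero]
  constructor
  · rintro ⟨z, hz⟩
    refine ⟨(z : BAlgebra k x y) + (v : BAlgebra k x y), Prod.ext ?_ ?_⟩
    · change tiltf k x y (pr1 k x y _) = u
      rw [map_add, pr1_P1, pr1_P2, add_zero]
      exact hz
    · change pr2 k x y _ = v
      rw [map_add, pr2_P1, pr2_P2, zero_add]
  · rintro ⟨z, hz⟩
    exact ⟨pr1 k x y z, congrArg Prod.fst hz⟩

end Modules

/-! ### `Ext¹` from a projective presentation -/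

section ExtVanishing

open Limits

/-- Comparison of resolutions in degree one: if `Q₁ → Q₀ → X → 0` is exact with `Q₁`, `Q₀`
projective and every morphism `Q₁ → Y` extends to `Q₀`, then every degree-one cocycle
`P₁ → Y` of an arbitrary projective resolution of `X` is a coboundary. -/
lemma cocycle_extends {C : Type*} [Category C] [Abelian C] {Q₁ Q₀ X Y : C}
    [Projective Q₁] [Projective Q₀] (i : Q₁ ⟶ Q₀) (π : Q₀ ⟶ X) [Epi π] (w : i ≫ π = 0)
    (hex : (ShortComplex.mk i π w).Exact)
    (hY : ∀ φ : Q₁ ⟶ Y, ∃ e : Q₀ ⟶ Y, i ≫ e = φ)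
    (P : ProjectiveResolution X) (g : P.complex.X 1 ⟶ Y) (hg : P.complex.d 2 1 ≫ g = 0) :
    ∃ h : P.complex.X 0 ⟶ Y, P.complex.d 1 0 ≫ h = g := by
  -- The augmentation of `P`, with target `X` itself.
  let ε : P.complex.X 0 ⟶ X := P.π.f 0
  have : Epi ε := inferInstanceAs (Epi (P.π.f 0))
  have wε : P.complex.d 1 0 ≫ ε = 0 := P.complex_d_comp_π_f_zero
  have ex0 : (ShortComplex.mk _ _ wε).Exact := P.exact₀
  have ex1 := P.exact_succ 0
  -- Comparison maps in degrees `0` and `1`, in both directions, over the identity of `X`.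
  let a : Q₀ ⟶ P.complex.X 0 := Projective.factorThru π ε
  have ha : a ≫ ε = π := Projective.factorThru_comp _ _
  let b : P.complex.X 0 ⟶ Q₀ := Projective.factorThru ε π
  have hb : b ≫ π = ε := Projective.factorThru_comp _ _
  obtain ⟨a₁, ha₁⟩ : ∃ a₁ : Q₁ ⟶ P.complex.X 1, a₁ ≫ P.complex.d 1 0 = i ≫ a :=
    ⟨_, ex0.liftFromProjective_comp (i ≫ a) (by simp [ha, w])⟩
  obtain ⟨b₁, hb₁⟩ : ∃ b₁ : P.complex.X 1 ⟶ Q₁, b₁ ≫ i = P.complex.d 1 0 ≫ b :=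
    ⟨_, hex.liftFromProjective_comp (P.complex.d 1 0 ≫ b) (by simp [hb, wε])⟩
  -- A homotopy from the identity of `P` to the composite comparison map.
  obtain ⟨s, hs⟩ : ∃ s : P.complex.X 0 ⟶ P.complex.X 1,
      s ≫ P.complex.d 1 0 = 𝟙 _ - b ≫ a :=
    ⟨_, ex0.liftFromProjective_comp (𝟙 _ - b ≫ a) (by simp [ha, hb])⟩
  obtain ⟨t, ht⟩ : ∃ t : P.complex.X 1 ⟶ P.complex.X 2,
      t ≫ P.complex.d 2 1 = 𝟙 _ - P.complex.d 1 0 ≫ s - b₁ ≫ a₁ :=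
    ⟨_, ex1.liftFromProjective_comp (𝟙 _ - P.complex.d 1 0 ≫ s - b₁ ≫ a₁) (by
      simp [hs, ha₁, reassoc_of% hb₁])⟩
  obtain ⟨e, he⟩ := hY (a₁ ≫ g)
  refine ⟨s ≫ g + b ≫ e, ?_⟩
  have h1 : (𝟙 _ - P.complex.d 1 0 ≫ s - b₁ ≫ a₁) ≫ g = 0 := by
    rw [← ht, Category.assoc, hg, comp_zero]
  simp only [Preadditive.sub_comp, Category.id_comp, Category.assoc, ← he] at h1
  rw [reassoc_of% hb₁] at h1
  rw [Preadditive.comp_add]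
  rw [sub_sub, sub_eq_zero] at h1
  exact h1.symm

/-- `Ext¹(X, Y) = 0` if `X` has a projective presentation `Q₁ → Q₀ → X → 0` such that every
morphism `Q₁ → Y` extends to `Q₀`. -/
lemma subsingleton_Ext_one {k : Type*} [Ring k] {C : Type*} [Category C] [Abelian C]
    [Linear k C] [EnoughProjectives C] {Q₁ Q₀ X Y : C}
    [Projective Q₁] [Projective Q₀] (i : Q₁ ⟶ Q₀) (π : Q₀ ⟶ X) [Epi π] (w : i ≫ π = 0)
    (hex : (ShortComplex.mk i π w).Exact)
    (hY : ∀ φ : Q₁ ⟶ Y, ∃ e : Q₀ ⟶ Y, i ≫ e = φ) :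
    Subsingleton (((Ext k C 1).obj (Opposite.op X)).obj Y) := by
  apply ModuleCat.subsingleton_of_isZero
  let P := projectiveResolution X
  refine IsZero.of_iso ?_ (P.isoExt 1 Y)
  rw [← HomologicalComplex.exactAt_iff_isZero_homology,
    HomologicalComplex.exactAt_iff' _ 0 1 2 (by simp) (by simp),
    ShortComplex.moduleCat_exact_iff]
  intro g hg
  exact cocycle_extends i π w hex hY P g hg

end ExtVanishing

/-- `T = coker(f) ⊕ P₂` is a tilting module over `B(x,y)` when
`x ≥ 2` and `y ≥ 1`. -/
theorem TiltingT_is_tilting (k : Type) [Field k] (x y : ℕ) (hx : 2 ≤ x) (hy : 1 ≤ y) :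
    -- `T` has projective dimension at most `1`
    (∃ (Q₁ Q₀ : Type) (_ : AddCommGroup Q₁) (_ : AddCommGroup Q₀)
        (_ : Module (BAlgebra k x y)ᵐᵒᵖ Q₁) (_ : Module (BAlgebra k x y)ᵐᵒᵖ Q₀),
      Module.Projective (BAlgebra k x y)ᵐᵒᵖ Q₁ ∧ Module.Projective (BAlgebra k x y)ᵐᵒᵖ Q₀ ∧
      ∃ (i : Q₁ →ₗ[(BAlgebra k x y)ᵐᵒᵖ] Q₀) (π : Q₀ →ₗ[(BAlgebra k x y)ᵐᵒᵖ] TiltingT k x y),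
        Function.Injective i ∧ Function.Surjective π ∧ Function.Exact i π) ∧
    -- `Ext¹(T, T) = 0`
    Subsingleton
      (((Ext k (ModuleCat (BAlgebra k x y)ᵐᵒᵖ) 1).obj
          (Opposite.op (ModuleCat.of (BAlgebra k x y)ᵐᵒᵖ (TiltingT k x y)))).obj
        (ModuleCat.of (BAlgebra k x y)ᵐᵒᵖ (TiltingT k x y))) ∧
    -- there is a short exact sequence `0 → B(x,y) → T⁰ → T¹ → 0` in which `T⁰` and `T¹`
    -- are finite direct sums of direct summands of `T`
    (∃ (T0 T1 : Type) (_ : AddCommGroup T0) (_ : AddCommGroup T1)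
        (_ : Module (BAlgebra k x y)ᵐᵒᵖ T0) (_ : Module (BAlgebra k x y)ᵐᵒᵖ T1),
      IsSummandOfFinSums (BAlgebra k x y)ᵐᵒᵖ (TiltingT k x y) T0 ∧
      IsSummandOfFinSums (BAlgebra k x y)ᵐᵒᵖ (TiltingT k x y) T1 ∧
      ∃ (g : BAlgebra k x y →ₗ[(BAlgebra k x y)ᵐᵒᵖ] T0) (h : T0 →ₗ[(BAlgebra k x y)ᵐᵒᵖ] T1),
        Function.Injective g ∧ Function.Surjective h ∧ Function.Exact g h) := by
  have hx0 : 0 < x := by omega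
  refine ⟨⟨P1 k x y, (Fin x → P2 k x y) × P2 k x y, inferInstance, inferInstance, inferInstance,
    inferInstance, inferInstance, inferInstance, resMap k x y, toT k x y,
    resMap_injective hx0, toT_surjective, resMap_exact⟩, ?_,
    ⟨(Fin x → P2 k x y) × P2 k x y, (Fin x → P2 k x y) ⧸ LinearMap.range (tiltf k x y),
      inferInstance, inferInstance, inferInstance, inferInstance, isSummand_P2_pow_prod, isSummand_coker,
      coresMap k x y, (LinearMap.range (tiltf k x y)).mkQ ∘ₗ LinearMap.fst _ _ _,
      coresMap_injective hx0, (Submodule.mkQ_surjective _).comp LinearMap.fst_surjective,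
      coresMap_exact⟩⟩
  have hπ : Epi (ModuleCat.ofHom (toT k x y)) :=
    (ModuleCat.epi_iff_surjective _).2 toT_surjective
  have h1 : Projective (ModuleCat.of (BAlgebra k x y)ᵐᵒᵖ (P1 k x y)) :=
    (IsProjective.iff_projective _).1 inferInstance
  have h0 : Projective (ModuleCat.of (BAlgebra k x y)ᵐᵒᵖ ((Fin x → P2 k x y) × P2 k x y)) :=
    (IsProjective.iff_projective _).1 inferInstance
  refine subsingleton_Ext_one (ModuleCat.ofHom (resMap k x y)) (ModuleCat.ofHom (toT k x y))
    (ModuleCat.hom_ext resMap_exact.linearMap_comp_eq_zero) ?_ fun φ => ?_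
  · exact (ShortComplex.ShortExact.moduleCat_exact_iff_function_exact _).2 resMap_exact
  · obtain ⟨e, he⟩ := exists_extension φ.hom
    exact ⟨ModuleCat.ofHom e, ModuleCat.hom_ext he⟩

end
end

section
/- Let x ≥ 2 and y ≥ 1. With T = coker(f) ⊕ P₂ as above (f : P₁ → P₂^{⊕x} the map with components left multiplication by the arrows α_p), the endomorphism algebra E = End_{B(x,y)}(T) is not a quasi-hereditary algebra. -/
/-!
A ring `A` in which every nonzero idempotent `e` has a nonzero `n ∈ eAe` with `n A n = 0` is not
quasi-hereditary: the corner `eAe` is then not semiprime, hence not semisimple, so the only heredity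
ideal of `A` is `0` and every chain of ideals as in the definition stays at `0`
(`not_isQuasiHereditary`). Projectivity of the ideals plays no role.

The ring `E = End(T)` has this property (`TiltingT.hasSquareZeroCorners`) because both local corners
`End(P₂)` and `End(coker f)` have a nonzero square-zero radical. Let `N` be the span of the paths
`α_p β_q`, so that `e₂ B e₂ = k e₂ + N` and `N² = 0`. The endomorphism `mP` (multiplication by
`α_p β_q` on `P₂`) and the endomorphism `mC` (the same on one coordinate of `coker f`) satisfy
`m E m = 0`, since `β_q B α_p = 0`; `mC` is nonzero because there are at least two arrows `α`.

An endomorphism `φ` acts on `P₂` modulo `N` by a scalar `d`. The relation `∑ γ_j α_j = 0` between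
the generators `γ_j` of `coker f` forces `φ` to act on `coker f` modulo `N` by a single scalar `μ`
and to send `coker f` into `P₂` through the radical (`TiltingT.map_γ`). For an idempotent `φ`: if
`d ≠ 0` then `φ mP φ ≠ 0`, if `μ ≠ 0` then `φ mC φ ≠ 0`, and if `d = μ = 0` then `φ = 0`.
-/

/-!
Statement 4: for `x ≥ 2`, `y ≥ 1`, with `T = coker(f) ⊕ P₂` as in Statement 3
(`f : P₁ → P₂^{⊕x}` the map with components left multiplication by the arrows `α_p`),
the endomorphism algebra `E = End_{B(x,y)}(T)` is not quasi-hereditary.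
-/

noncomputable section
set_option linter.unusedSectionVars false

universe u

section QuasiHereditaryDefs

variable {A : Type u} [Ring A]

/-- The corner `eAe` of a ring `A` at an element `e`, as a non-unital subring:
it consists of all `z` with `e * z = z = z * e`. -/
def cornerNonUnitalSubring (e : A) : NonUnitalSubring A where
  carrier := {z | e * z = z ∧ z * e = z}
  add_mem' := by
    rintro a b ⟨ha1, ha2⟩ ⟨hb1, hb2⟩
    exact ⟨by rw [mul_add, ha1, hb1], by rw [add_mul, ha2, hb2]⟩
  zero_mem' := ⟨mul_zero e, zero_mul e⟩
  neg_mem' := by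
    rintro a ⟨h1, h2⟩
    exact ⟨by rw [mul_neg, h1], by rw [neg_mul, h2]⟩
  mul_mem' := by
    rintro a b ⟨ha1, -⟩ ⟨-, hb2⟩
    exact ⟨by rw [← mul_assoc, ha1], by rw [mul_assoc, hb2]⟩

/-- If `e` is idempotent, the corner `eAe` is a unital ring with unit `e`. -/
def cornerRing {e : A} (he : IsIdempotentElem e) : Ring (cornerNonUnitalSubring e) :=
  { (inferInstance : NonUnitalRing (cornerNonUnitalSubring e)) with
    one := ⟨e, he, he⟩
    one_mul := fun a => Subtype.ext a.2.1
    mul_one := fun a => Subtype.ext a.2.2 }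

/-- A two-sided ideal of `A`, regarded as a submodule of the right regular `A`-module
(i.e. as a left module over `Aᵐᵒᵖ`). -/
def TwoSidedIdeal.rightSubmodule (J : TwoSidedIdeal A) : Submodule Aᵐᵒᵖ A where
  carrier := J
  add_mem' := J.add_mem
  zero_mem' := J.zero_mem
  smul_mem' := fun c {z} hz => by
    simpa [MulOpposite.smul_eq_mul_unop] using J.mul_mem_right z c.unop hz

/-- A two-sided ideal `J` of a ring `A` is a heredity ideal if `J = AeA` for some
idempotent `e` such that the corner ring `eAe` is semisimple and `J` is projective
as a right `A`-module. -/
def IsHeredityIdeal (J : TwoSidedIdeal A) : Prop :=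
  ∃ e : A, ∃ he : IsIdempotentElem e,
    J = TwoSidedIdeal.span {e} ∧
    (letI := cornerRing he; IsSemisimpleRing (cornerNonUnitalSubring e)) ∧
    Module.Projective Aᵐᵒᵖ J.rightSubmodule

/-- A ring `A` is quasi-hereditary if there is a chain of two-sided ideals
`0 = J₀ ⊆ J₁ ⊆ ⋯ ⊆ J_m = A` such that for each `i`, the image of `J_{i+1}` in the
quotient ring `A / J_i` is a heredity ideal of `A / J_i`. -/
def IsQuasiHereditary (A : Type u) [Ring A] : Prop :=
  ∃ (m : ℕ) (J : Fin (m + 1) → TwoSidedIdeal A),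
    Monotone J ∧ J 0 = ⊥ ∧ J (Fin.last m) = ⊤ ∧
    ∀ i : Fin m,
      IsHeredityIdeal
        (TwoSidedIdeal.span ((J i.castSucc).ringCon.mk' '' (J i.succ : Set A)))

end QuasiHereditaryDefs
variable (k : Type) [Field k] (x y : ℕ)

/-! ### Quasi-hereditary rings and square-zero corners -/

/-- Semisimple rings are semiprime. -/
lemma eq_zero_of_semisimple {R : Type*} [Ring R] [IsSemisimpleRing R] (n : R)
    (h : ∀ z, n * z * n = 0) : n = 0 := by
  obtain ⟨e, he, hs⟩ := IsSemisimpleRing.ideal_eq_span_idempotent (Ideal.span {n})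
  have h1 : e ∈ Ideal.span {n} := by rw [hs]; exact Ideal.mem_span_singleton_self e
  have h2 : n ∈ Ideal.span {e} := by rw [← hs]; exact Ideal.mem_span_singleton_self n
  obtain ⟨r, rfl⟩ := Ideal.mem_span_singleton'.1 h1
  obtain ⟨s, hs⟩ := Ideal.mem_span_singleton'.1 h2
  have h3 : n * (r * n) = n := by
    calc n * (r * n) = s * (r * n) * (r * n) := by rw [hs]
      _ = s * (r * n) := by rw [mul_assoc, he.eq]
      _ = n := hs
  rw [← h3, ← mul_assoc, h]

/-- Every nonzero corner `eAe` contains a nonzero `n` with `n A n = 0`. The condition on all of `A`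
is equivalent to the one on `eAe`, as `n z n = n (e z e) n`. -/
def HasSquareZeroCorners (A : Type*) [Ring A] : Prop :=
  ∀ e : A, e * e = e → e ≠ 0 → ∃ n : A, e * n = n ∧ n * e = n ∧ n ≠ 0 ∧ ∀ z, n * z * n = 0

lemma HasSquareZeroCorners.congr {A A' : Type*} [Ring A] [Ring A'] (f : A ≃+* A')
    (hA : HasSquareZeroCorners A) : HasSquareZeroCorners A' := by
  intro e he h0
  obtain ⟨n, h1, h2, h3, h4⟩ := hA (f.symm e) (by rw [← map_mul, he]) (by simpa using h0)
  refine ⟨f n, ?_, ?_, by simpa using h3, fun z => ?_⟩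
  · simpa using congrArg f h1
  · simpa using congrArg f h2
  · simpa using congrArg f (h4 (f.symm z))

/-- If all nonzero corners fail to be semiprime, there is no nonzero heredity ideal. -/
lemma IsHeredityIdeal.eq_bot {A : Type u} [Ring A] (hA : HasSquareZeroCorners A)
    {J : TwoSidedIdeal A} (hJ : IsHeredityIdeal J) : J = ⊥ := by
  obtain ⟨e, he, rfl, hs, -⟩ := hJ
  suffices e = 0 by
    subst this
    rw [eq_bot_iff, TwoSidedIdeal.span_le]
    simp
  by_contra h0
  obtain ⟨n, h1, h2, h3, h4⟩ := hA e he h0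
  refine h3 (congrArg Subtype.val (@eq_zero_of_semisimple _ (cornerRing he) hs ⟨n, h1, h2⟩ ?_))
  intro z
  exact Subtype.ext (h4 z.1)

lemma not_isQuasiHereditary {A : Type u} [Ring A] [Nontrivial A]
    (hA : HasSquareZeroCorners A) : ¬ IsQuasiHereditary A := by
  rintro ⟨m, J, -, h0, h1, hJ⟩
  have key : ∀ i : Fin (m + 1), J i = ⊥ := by
    intro i
    induction i using Fin.induction with
    | zero => exact h0
    | succ i ih =>
      have inj : Function.Injective (J i.castSucc).ringCon.mk' := by
        rw [ih, injective_iff_map_eq_zero]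
        intro a ha
        have : (⊥ : TwoSidedIdeal A).ringCon a 0 := (RingCon.eq _).1 ha
        rwa [TwoSidedIdeal.rel_iff, sub_zero, TwoSidedIdeal.mem_bot] at this
      have hb := (hJ i).eq_bot
        (hA.congr (RingEquiv.ofBijective _ ⟨inj, RingCon.mk'_surjective _⟩))
      rw [eq_bot_iff]
      intro a ha
      have h2 : (J i.castSucc).ringCon.mk' a ∈
          TwoSidedIdeal.span ((J i.castSucc).ringCon.mk' '' (J i.succ : Set A)) :=
        TwoSidedIdeal.subset_span ⟨a, ha, rfl⟩
      rw [hb, TwoSidedIdeal.mem_bot] at h2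
      rw [TwoSidedIdeal.mem_bot]
      exact inj (by rw [h2, map_zero])
  have h2 : (1 : A) ∈ (⊤ : TwoSidedIdeal A) := trivial
  rw [← h1, key, TwoSidedIdeal.mem_bot] at h2
  exact one_ne_zero h2

/-! ### Structure of the algebra `B(x,y)` -/

namespace BAlgebra

variable {k : Type} [Field k] {x y : ℕ}

variable (k x y) in
/-- The quotient map from the free algebra, with `BAlgebra k x y` as its syntactic codomain. -/
def mk : FreeAlgebra k (BGen x y) →ₐ[k] BAlgebra k x y := RingQuot.mkAlgHom k (BRel k x y)

lemma mk_rel {u v : FreeAlgebra k (BGen x y)} (h : BRel k x y u v) : mk k x y u = mk k x y v :=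
  RingQuot.mkAlgHom_rel k h

lemma e1_e1 : Be1 k x y * Be1 k x y = Be1 k x y :=
  (map_mul (mk k x y) _ _).symm.trans (mk_rel .idem1)
lemma e2_e2 : Be2 k x y * Be2 k x y = Be2 k x y :=
  (map_mul (mk k x y) _ _).symm.trans (mk_rel .idem2)
lemma e1_e2 : Be1 k x y * Be2 k x y = 0 :=
  (map_mul (mk k x y) _ _).symm.trans ((mk_rel .orth12).trans (map_zero (mk k x y)))
lemma e2_e1 : Be2 k x y * Be1 k x y = 0 :=
  (map_mul (mk k x y) _ _).symm.trans ((mk_rel .orth21).trans (map_zero (mk k x y)))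
lemma e1_add_e2 : Be1 k x y + Be2 k x y = 1 :=
  (map_add (mk k x y) _ _).symm.trans ((mk_rel .sum).trans (map_one (mk k x y)))
lemma e2_a (p : Fin x) : Be2 k x y * Ba k x y p = Ba k x y p :=
  (map_mul (mk k x y) _ _).symm.trans (mk_rel (.a_tgt p))
lemma a_e1 (p : Fin x) : Ba k x y p * Be1 k x y = Ba k x y p :=
  (map_mul (mk k x y) _ _).symm.trans (mk_rel (.a_src p))
lemma e1_b (q : Fin y) : Be1 k x y * Bb k x y q = Bb k x y q :=
  (map_mul (mk k x y) _ _).symm.trans (mk_rel (.b_tgt q))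
lemma b_e2 (q : Fin y) : Bb k x y q * Be2 k x y = Bb k x y q :=
  (map_mul (mk k x y) _ _).symm.trans (mk_rel (.b_src q))
lemma b_a (p : Fin x) (q : Fin y) : Bb k x y q * Ba k x y p = 0 :=
  (map_mul (mk k x y) _ _).symm.trans ((mk_rel (.ba p q)).trans (map_zero (mk k x y)))

lemma a_e2 (p : Fin x) : Ba k x y p * Be2 k x y = 0 := by
  rw [← a_e1, mul_assoc, e1_e2, mul_zero]
lemma e1_a (p : Fin x) : Be1 k x y * Ba k x y p = 0 := by
  rw [← e2_a, ← mul_assoc, e1_e2, zero_mul]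
lemma b_e1 (q : Fin y) : Bb k x y q * Be1 k x y = 0 := by
  rw [← b_e2, mul_assoc, e2_e1, mul_zero]
lemma e2_b (q : Fin y) : Be2 k x y * Bb k x y q = 0 := by
  rw [← e1_b, ← mul_assoc, e2_e1, zero_mul]
lemma a_a (p p' : Fin x) : Ba k x y p * Ba k x y p' = 0 := by
  rw [← e2_a p', ← mul_assoc, a_e2, zero_mul]
lemma b_b (q q' : Fin y) : Bb k x y q * Bb k x y q' = 0 := by
  rw [← e1_b q', ← mul_assoc, b_e1, zero_mul]

/-- A set of paths spanning `B(x,y)`: the trivial paths, the arrows and the `α_p β_q`. -/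
inductive IsPath : BAlgebra k x y → Prop
  | e1 : IsPath (Be1 k x y)
  | e2 : IsPath (Be2 k x y)
  | a (p : Fin x) : IsPath (Ba k x y p)
  | b (q : Fin y) : IsPath (Bb k x y q)
  | ab (p : Fin x) (q : Fin y) : IsPath (Ba k x y p * Bb k x y q)

lemma mem_span_isPath (z : BAlgebra k x y) : z ∈ Submodule.span k {w | IsPath w} := by
  set S := Submodule.span k {w : BAlgebra k x y | IsPath w} with hS
  have sub : ∀ {w : BAlgebra k x y}, IsPath w → w ∈ S := fun h => Submodule.subset_span h
  -- It suffices that left multiplication by every element preserves the span.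
  suffices H : ∀ u : FreeAlgebra k (BGen x y), ∀ w ∈ S,
      mk k x y u * w ∈ S by
    obtain ⟨u, rfl⟩ := RingQuot.mkAlgHom_surjective k (BRel k x y) z
    have h1 : (1 : BAlgebra k x y) ∈ S := by
      rw [← e1_add_e2]
      exact S.add_mem (sub .e1) (sub .e2)
    have h2 := H u 1 h1
    rwa [mul_one] at h2
  intro u
  induction u using FreeAlgebra.induction with
  | grade0 r =>
    intro w hw
    rw [AlgHom.commutes]
    have := S.smul_mem r hw
    rwa [Algebra.smul_def] at this
  | add u v hu hv =>
    intro w hw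
    rw [map_add]
    have := S.add_mem (hu w hw) (hv w hw)
    rwa [← add_mul] at this
  | mul u v hu hv =>
    intro w hw
    rw [map_mul]
    have := hu _ (hv w hw)
    rwa [← mul_assoc] at this
  | grade1 g =>
    intro w hw
    induction hw using Submodule.span_induction with
    | zero => rw [mul_zero]; exact S.zero_mem
    | add u v _ _ hu hv => rw [mul_add]; exact S.add_mem hu hv
    | smul r u _ hu => rw [mul_smul_comm]; exact S.smul_mem r hu
    | mem w hw =>
      have h0 := S.zero_mem
      cases g with
      | e1 =>
        change Be1 k x y * w ∈ S
        cases hw <;> simp only [← mul_assoc, e1_e1, e1_e2, e1_a, e1_b, zero_mul, h0] <;>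
          first | exact sub .e1 | exact sub (.b _)
      | e2 =>
        change Be2 k x y * w ∈ S
        cases hw <;> simp only [← mul_assoc, e2_e1, e2_e2, e2_a, e2_b, h0] <;>
          first | exact sub .e2 | exact sub (.a _) | exact sub (.ab _ _)
      | a p =>
        change Ba k x y p * w ∈ S
        cases hw <;> (try simp only [← mul_assoc, a_e1, a_e2, a_a, zero_mul, h0]) <;>
          first | exact sub (.a _) | exact sub (.ab _ _)
      | b q =>
        change Bb k x y q * w ∈ S
        cases hw <;> simp only [← mul_assoc, b_e1, b_e2, b_a, b_b, zero_mul, h0]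
        exact sub (.b _)

/-- `β_q B α_p = 0`: every path from `1` to `1` of positive length contains some `β α`. -/
lemma b_mul_a (p : Fin x) (q : Fin y) (z : BAlgebra k x y) :
    Bb k x y q * z * Ba k x y p = 0 := by
  induction mem_span_isPath z using Submodule.span_induction with
  | zero => simp
  | add u v _ _ hu hv => rw [mul_add, add_mul, hu, hv, add_zero]
  | smul r u _ hu => rw [mul_smul_comm, smul_mul_assoc, hu, smul_zero]
  | mem w hw =>
    cases hw <;> simp only [← mul_assoc, b_e1, b_e2, b_a, b_b, zero_mul]

variable (k x y) in
/-- The radical of the corner `e₂ B e₂`: the span of the paths `α_p β_q`. -/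
def N : Submodule k (BAlgebra k x y) :=
  Submodule.span k (Set.range fun i : Fin x × Fin y => Ba k x y i.1 * Bb k x y i.2)

lemma ab_mem_N (p : Fin x) (q : Fin y) : Ba k x y p * Bb k x y q ∈ N k x y :=
  Submodule.subset_span ⟨(p, q), rfl⟩

/-- Equalities of `k`-linear maps on `N` are tested on the paths `α_p β_q`. -/
lemma N_ext {M : Type*} [AddCommGroup M] [Module k M] (f g : BAlgebra k x y →ₗ[k] M)
    (h : ∀ p q, f (Ba k x y p * Bb k x y q) = g (Ba k x y p * Bb k x y q))
    {n : BAlgebra k x y} (hn : n ∈ N k x y) : f n = g n :=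
  LinearMap.eqOn_span (by rintro _ ⟨i, rfl⟩; exact h _ _) hn

lemma N_mul_N {n n' : BAlgebra k x y} (hn : n ∈ N k x y) (hn' : n' ∈ N k x y) : n * n' = 0 :=
  N_ext (LinearMap.mulRight k n') 0 (fun p q => by
    refine N_ext (LinearMap.mulLeft k (Ba k x y p * Bb k x y q)) 0 (fun p' q' => ?_) hn'
    change Ba k x y p * Bb k x y q * (Ba k x y p' * Bb k x y q') = 0
    rw [← mul_assoc, mul_assoc (Ba k x y p), b_a, mul_zero, zero_mul]) hn

lemma e2_N {n : BAlgebra k x y} (hn : n ∈ N k x y) : Be2 k x y * n = n :=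
  N_ext (LinearMap.mulLeft k (Be2 k x y)) LinearMap.id (fun p q => by
    change Be2 k x y * (Ba k x y p * Bb k x y q) = Ba k x y p * Bb k x y q
    rw [← mul_assoc, e2_a]) hn

lemma N_a {n : BAlgebra k x y} (hn : n ∈ N k x y) (p : Fin x) : n * Ba k x y p = 0 :=
  N_ext (LinearMap.mulRight k (Ba k x y p)) 0 (fun p' q => by
    change Ba k x y p' * Bb k x y q * Ba k x y p = 0
    rw [mul_assoc, b_a, mul_zero]) hn

/-- `e₂ B e₂ = k e₂ + N`. -/
lemma exists_corner (z : BAlgebra k x y) :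
    ∃ c : k, ∃ n ∈ N k x y, Be2 k x y * z * Be2 k x y = c • Be2 k x y + n := by
  induction mem_span_isPath z using Submodule.span_induction with
  | zero => exact ⟨0, 0, zero_mem _, by simp⟩
  | add u v _ _ hu hv =>
    obtain ⟨c, n, hn, h⟩ := hu
    obtain ⟨c', n', hn', h'⟩ := hv
    exact ⟨c + c', n + n', add_mem hn hn', by rw [mul_add, add_mul, h, h', add_smul]; abel⟩
  | smul r u _ hu =>
    obtain ⟨c, n, hn, h⟩ := hu
    exact ⟨r * c, r • n, Submodule.smul_mem _ _ hn, by
      rw [mul_smul_comm, smul_mul_assoc, h, smul_add, smul_smul]⟩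
  | mem w hw =>
    cases hw with
    | e1 => exact ⟨0, 0, zero_mem _, by simp [e2_e1]⟩
    | e2 => exact ⟨1, 0, zero_mem _, by simp [e2_e2]⟩
    | a p => exact ⟨0, 0, zero_mem _, by simp [e2_a, a_e2]⟩
    | b q => exact ⟨0, 0, zero_mem _, by simp [e2_b]⟩
    | ab p q => exact ⟨0, _, ab_mem_N p q, by
        rw [← mul_assoc, e2_a, mul_assoc, b_e2, zero_smul, zero_add]⟩

variable (k x y) in
/-- Images of the generators in a matrix representation of dimension vector `(1, 1 + x)`.
Index `inl 0` is a vector at vertex `1`, index `inl 1` a vector at vertex `2` sent to the former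
by all `β_q`, and `inr p` is the image of the vector at vertex `1` under `α_p`. -/
def repGen : BGen x y → Matrix (Fin 2 ⊕ Fin x) (Fin 2 ⊕ Fin x) k
  | .e1 => Matrix.single (.inl 0) (.inl 0) 1
  -- `e₂` is the identity on every basis vector other than `inl 0`.
  | .e2 => 1 - Matrix.single (.inl 0) (.inl 0) 1
  | .a p => Matrix.single (.inr p) (.inl 0) 1
  | .b _ => Matrix.single (.inl 0) (.inl 1) 1

variable (k x y) in
/-- The matrix representation of `B(x,y)` given by `repGen`. -/
def rep : BAlgebra k x y →ₐ[k] Matrix (Fin 2 ⊕ Fin x) (Fin 2 ⊕ Fin x) k :=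
  RingQuot.liftAlgHom k ⟨FreeAlgebra.lift k (repGen k x y), by
    intro u v h
    cases h <;> simp [repGen, mul_sub, sub_mul]⟩

lemma rep_mk (g : BGen x y) :
    rep k x y (mk k x y (FreeAlgebra.ι k g)) = repGen k x y g := by
  refine (RingQuot.liftAlgHom_mkAlgHom_apply ..).trans ?_
  simp

lemma rep_e2 : rep k x y (Be2 k x y) = 1 - Matrix.single (.inl 0) (.inl 0) 1 := rep_mk _
lemma rep_a (p : Fin x) : rep k x y (Ba k x y p) = Matrix.single (.inr p) (.inl 0) 1 := rep_mk _
lemma rep_b (q : Fin y) : rep k x y (Bb k x y q) = Matrix.single (.inl 0) (.inl 1) 1 := rep_mk _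

lemma rep_a_mul (p p' : Fin x) (z : BAlgebra k x y) (j : Fin 2 ⊕ Fin x) :
    rep k x y (Ba k x y p * z) (.inr p') j = if p' = p then rep k x y z (.inl 0) j else 0 := by
  rw [map_mul, rep_a]
  split_ifs with h
  · subst h; simp
  · exact Matrix.single_mul_apply_of_ne _ _ _ _ _ (by simpa using h) _

/-- The first column of `rep` reads off the coefficients of `∑ λ_p α_p`. -/
lemma rep_sum_a (c : Fin x → k) (p : Fin x) :
    rep k x y (∑ j, c j • Ba k x y j) (.inr p) (.inl 0) = c p := by
  simp [map_sum, rep_a, Matrix.sum_apply, Matrix.single_apply]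

lemma sum_a_eq_zero {c : Fin x → k} (h : ∑ j, c j • Ba k x y j = 0) (p : Fin x) : c p = 0 := by
  rw [← rep_sum_a (y := y) c p, h]; simp

lemma ab_ne_zero (p : Fin x) (q : Fin y) : Ba k x y p * Bb k x y q ≠ 0 := by
  intro h
  have := rep_a_mul p p (Bb k x y q) (.inl 1)
  rw [h, rep_b] at this
  simp at this

/-- If `α_p z = c α_p β_q` and `α_{p'} z = 0` then `c = 0`: for `p ≠ p'`, the image of `f` contains
no element `c α_p β_q` concentrated in the coordinate `p`. -/
lemma eq_zero_of_a_mul {p p' : Fin x} {q : Fin y} {c : k}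
    {z : BAlgebra k x y} (h : c • (Ba k x y p * Bb k x y q) = Ba k x y p * z)
    (h' : 0 = Ba k x y p' * z) : c = 0 := by
  have h1 := rep_a_mul p p z (.inl 1)
  have h2 := rep_a_mul p' p' z (.inl 1)
  rw [← h', if_pos rfl, map_zero] at h2
  rw [← h, map_smul, Matrix.smul_apply, rep_a_mul, if_pos rfl, if_pos rfl, ← h2, rep_b] at h1
  simpa using h1

end BAlgebra

/-! ### Elements and endomorphisms of `T` -/

namespace TiltingT

open BAlgebra MulOpposite

variable {k : Type} [Field k] {x y : ℕ}

/-- The element `e₂ z` of `P₂`. -/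
def p2 (z : BAlgebra k x y) : P2 k x y :=
  ⟨Be2 k x y * z, by
    change Be2 k x y * (Be2 k x y * z) = Be2 k x y * z
    rw [← mul_assoc, e2_e2]⟩

lemma p2_val (w : P2 k x y) : p2 (w : BAlgebra k x y) = w := Subtype.ext w.2

lemma p2_smul (z b : BAlgebra k x y) : op b • p2 z = p2 (z * b) :=
  Subtype.ext (mul_assoc _ _ _)

lemma p2_add (z z' : BAlgebra k x y) : p2 (z + z') = p2 z + p2 z' :=
  Subtype.ext (mul_add _ _ _)

lemma p2_zero : p2 (0 : BAlgebra k x y) = 0 := Subtype.ext (mul_zero _)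

/-- The element `([e₂ r₁, …, e₂ r_x], e₂ s)` of `T = coker f ⊕ P₂`. -/
def comb (r : Fin x → BAlgebra k x y) (s : BAlgebra k x y) : TiltingT k x y :=
  ((LinearMap.range (tiltf k x y)).mkQ fun j => p2 (r j), p2 s)

lemma comb_surj (t : TiltingT k x y) : ∃ r s, t = comb r s := by
  obtain ⟨c, w⟩ := t
  obtain ⟨u, rfl⟩ := Submodule.mkQ_surjective _ c
  exact ⟨fun j => u j, w, by simp only [comb, p2_val]; rfl⟩

lemma comb_smul (r : Fin x → BAlgebra k x y) (s b : BAlgebra k x y) :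
    op b • comb r s = comb (fun j => r j * b) (s * b) := by
  simp only [comb, ← p2_smul]
  rfl

lemma comb_add (r r' : Fin x → BAlgebra k x y) (s s' : BAlgebra k x y) :
    comb r s + comb r' s' = comb (r + r') (s + s') := by
  simp only [comb, Pi.add_apply, p2_add]
  rfl

lemma comb_zero : comb (0 : Fin x → BAlgebra k x y) 0 = 0 := by
  simp only [comb, Pi.zero_apply, p2_zero]
  rfl

lemma comb_sum {ι : Type*} (S : Finset ι) (r : ι → Fin x → BAlgebra k x y)
    (s : ι → BAlgebra k x y) :
    ∑ i ∈ S, comb (r i) (s i) = comb (∑ i ∈ S, r i) (∑ i ∈ S, s i) := by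
  classical
  induction S using Finset.induction_on with
  | empty => simp [comb_zero]
  | insert a S ha ih => simp [Finset.sum_insert ha, ih, comb_add]

lemma comb_e2 (r : Fin x → BAlgebra k x y) (s : BAlgebra k x y) :
    comb (fun j => Be2 k x y * r j) (Be2 k x y * s) = comb r s := by
  have h : ∀ z : BAlgebra k x y, p2 (Be2 k x y * z) = p2 z := fun z =>
    Subtype.ext (by
      change Be2 k x y * (Be2 k x y * z) = Be2 k x y * z
      rw [← mul_assoc, e2_e2])
  simp only [comb, h]
  rfl

lemma comb_snd {r r' : Fin x → BAlgebra k x y} {s s' : BAlgebra k x y}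
    (h : comb r s = comb r' s') : Be2 k x y * s = Be2 k x y * s' :=
  congrArg Subtype.val (congrArg Prod.snd h)

/-- If the `coker f`-component of `comb r s` vanishes, then `(e₂ r_j)_j` is in the image of `f`. -/
lemma comb_fst {r : Fin x → BAlgebra k x y} {s : BAlgebra k x y}
    (h : comb r s = 0) : ∃ z, ∀ j, Be2 k x y * r j = Ba k x y j * z := by
  have h1 : (LinearMap.range (tiltf k x y)).mkQ (fun j => p2 (r j)) = 0 := congrArg Prod.fst h
  rw [Submodule.mkQ_apply, Submodule.Quotient.mk_eq_zero] at h1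
  obtain ⟨z, hz⟩ := h1
  exact ⟨z, fun j => (congrArg Subtype.val (congrFun hz j)).symm⟩

/-- The generator `e₂` of the `j`-th copy of `P₂` in `P₂^{⊕x}`, viewed in `coker f`. -/
def γ (j : Fin x) : TiltingT k x y := comb (Pi.single j 1) 0

variable (k x y) in
/-- The generator `e₂` of the summand `P₂` of `T`. -/
def π₀ : TiltingT k x y := comb 0 1

lemma comb_eq (r : Fin x → BAlgebra k x y) (s : BAlgebra k x y) :
    comb r s = ∑ j, op (r j) • γ j + op s • π₀ k x y := by
  simp only [γ, π₀, comb_smul, comb_sum, comb_add]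
  congr 1
  · funext i
    simp [Pi.single_apply, Finset.sum_apply]
  · simp

/-- The defining relation `∑ γ_j α_j = 0` of `coker f`. -/
lemma sum_γ : ∑ j, op (Ba k x y j) • (γ j : TiltingT k x y) = 0 := by
  have h := comb_eq (Ba k x y) 0
  rw [op_zero, zero_smul, add_zero] at h
  rw [← h]
  refine Prod.ext ?_ (Subtype.ext (mul_zero _))
  change (LinearMap.range (tiltf k x y)).mkQ (fun j => p2 (Ba k x y j)) = 0
  rw [Submodule.mkQ_apply, Submodule.Quotient.mk_eq_zero]
  refine ⟨⟨Be1 k x y, e1_e1⟩, funext fun j => Subtype.ext ?_⟩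
  change Ba k x y j * Be1 k x y = Be2 k x y * Ba k x y j
  rw [a_e1, e2_a]

lemma γ_e2 (j : Fin x) : op (Be2 k x y) • (γ j : TiltingT k x y) = γ j := by
  rw [γ, comb_smul, ← comb_e2, ← comb_e2 (Pi.single j 1)]
  congr 1
  · funext i
    by_cases h : i = j
    · subst h; simp [e2_e2]
    · simp [h]
  · simp

lemma π₀_e2 : op (Be2 k x y) • π₀ k x y = π₀ k x y := by
  rw [π₀, comb_smul, ← comb_e2, ← comb_e2 0]
  congr 1
  · funext i
    simp
  · simp [e2_e2]

/-- Normal form of the elements of `T e₂`. -/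
lemma exists_normal {t : TiltingT k x y} (ht : op (Be2 k x y) • t = t) :
    ∃ (c : Fin x → k) (n : Fin x → BAlgebra k x y) (d : k) (m : BAlgebra k x y),
      (∀ j, n j ∈ N k x y) ∧ m ∈ N k x y ∧
      t = comb (fun j => c j • Be2 k x y + n j) (d • Be2 k x y + m) := by
  obtain ⟨r, s, rfl⟩ := comb_surj t
  choose c n hn h using fun j => exists_corner (r j)
  obtain ⟨d, m, hm, h'⟩ := exists_corner s
  refine ⟨c, n, d, m, hn, hm, ?_⟩
  simp only [← h, ← h']
  rw [← ht, comb_smul, ← comb_e2]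
  simp only [mul_assoc]

/-- The endomorphism ring `E = End(T)`. -/
abbrev EndT (k : Type) [Field k] (x y : ℕ) := Module.End (BAlgebra k x y)ᵐᵒᵖ (TiltingT k x y)

/-- An endomorphism of `T` is determined by its values on `γ_j` and `π₀`. -/
lemma map_comb (φ : EndT k x y) (r : Fin x → BAlgebra k x y) (s : BAlgebra k x y) :
    φ (comb r s) = ∑ j, op (r j) • φ (γ j) + op s • φ (π₀ k x y) := by
  rw [comb_eq, map_add, map_sum, map_smul]
  simp only [map_smul]

lemma ext_gen {φ ψ : EndT k x y} (h : ∀ j, φ (γ j) = ψ (γ j)) (h' : φ (π₀ k x y) = ψ (π₀ k x y)) :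
    φ = ψ := by
  ext t
  obtain ⟨r, s, rfl⟩ := comb_surj t
  simp only [map_comb, h, h']

lemma map_π₀ (φ : EndT k x y) :
    ∃ (c : Fin x → k) (n : Fin x → BAlgebra k x y) (d : k) (m : BAlgebra k x y),
      (∀ j, n j ∈ N k x y) ∧ m ∈ N k x y ∧
      φ (π₀ k x y) = comb (fun j => c j • Be2 k x y + n j) (d • Be2 k x y + m) :=
  exists_normal (by rw [← map_smul, π₀_e2])

lemma corner_mul_a {n : BAlgebra k x y} (hn : n ∈ N k x y) (c : k) (j : Fin x) :
    (c • Be2 k x y + n) * Ba k x y j = c • Ba k x y j := by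
  rw [add_mul, N_a hn, add_zero, smul_mul_assoc, e2_a]

lemma corner_mul_N {n n' : BAlgebra k x y} (hn : n ∈ N k x y) (hn' : n' ∈ N k x y) (c : k) :
    (c • Be2 k x y + n) * n' = c • n' := by
  rw [add_mul, N_mul_N hn hn', add_zero, smul_mul_assoc, e2_N hn']

lemma N_mul_corner {n n' : BAlgebra k x y} (hn : n ∈ N k x y) (hn' : n' ∈ N k x y) (c : k) :
    n' * (c • Be2 k x y + n) = c • n' := by
  have : n' * Be2 k x y = n' :=
    N_ext (LinearMap.mulRight k (Be2 k x y)) LinearMap.id (fun p q => by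
      change Ba k x y p * Bb k x y q * Be2 k x y = _
      rw [mul_assoc, b_e2]; rfl) hn'
  rw [mul_add, N_mul_N hn' hn, add_zero, mul_smul_comm, this]

/-- An endomorphism of `T` acts on `coker f` modulo the radical of `T` by a single scalar `μ`,
and maps `coker f` to `P₂` through the radical: both follow from the relation `∑ γ_j α_j = 0`. -/
lemma map_γ (φ : EndT k x y) :
    ∃ (μ : k) (n : Fin x → Fin x → BAlgebra k x y) (m : Fin x → BAlgebra k x y),
      (∀ j i, n j i ∈ N k x y) ∧ (∀ j, m j ∈ N k x y) ∧
      ∀ j, φ (γ j) = comb (fun i => (if i = j then μ else 0) • Be2 k x y + n j i) (m j) := by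
  choose c n d m hn hm h using fun j =>
    exists_normal (t := φ (γ j)) (by rw [← map_smul, γ_e2])
  have key : ∑ j, op (Ba k x y j) • φ (γ j) = 0 := by
    rw [← map_zero φ, ← sum_γ, map_sum]
    simp only [map_smul]
  simp only [h, comb_smul, corner_mul_a (hn _ _), corner_mul_a (hm _), comb_sum] at key
  have h2 := comb_snd (key.trans comb_zero.symm)
  simp only [Finset.mul_sum, mul_smul_comm, e2_a, mul_zero] at h2
  obtain ⟨z, hz⟩ := comb_fst key
  simp only [Finset.sum_apply, Finset.mul_sum, mul_smul_comm, e2_a] at hz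
  refine ⟨rep k x y z (.inl 0) (.inl 0), n, m, hn, hm, fun j => ?_⟩
  rw [h j, sum_a_eq_zero h2 j, zero_smul, zero_add]
  congr 1
  funext i
  rw [← rep_sum_a (c · i) j, hz, rep_a_mul]
  simp only [eq_comm (a := i)]

/-! ### Endomorphisms generating square-zero ideals -/

/-- The map `z ↦ e₂ n z` on `P₂`: left multiplication by `n` when `n ∈ e₂ B`. -/
def leftMul (n : BAlgebra k x y) : P2 k x y →ₗ[(BAlgebra k x y)ᵐᵒᵖ] P2 k x y where
  toFun z := p2 (n * z)
  map_add' z w := by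
    rw [← p2_add, ← mul_add]; rfl
  map_smul' c z := by
    change p2 (n * (z.1 * c.unop)) = op c.unop • p2 (n * z.1)
    rw [p2_smul, mul_assoc]

/-- The endomorphism of `T` acting on `P₂` by left multiplication by `n` and killing `coker f`. -/
def mP (n : BAlgebra k x y) : EndT k x y :=
  LinearMap.prodMap (0 : (_ ⧸ LinearMap.range (tiltf k x y)) →ₗ[(BAlgebra k x y)ᵐᵒᵖ] _) (leftMul n)

/-- The endomorphism of `P₂^{⊕x}` given by left multiplication by `n` on the copy `p`. -/
def mC' (p : Fin x) (n : BAlgebra k x y) :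
    (Fin x → P2 k x y) →ₗ[(BAlgebra k x y)ᵐᵒᵖ] (Fin x → P2 k x y) :=
  LinearMap.single (BAlgebra k x y)ᵐᵒᵖ (fun _ => P2 k x y) p ∘ₗ leftMul n ∘ₗ LinearMap.proj p

lemma mC'_tiltf (p : Fin x) {n : BAlgebra k x y} (hn : n ∈ N k x y) (z : P1 k x y) :
    mC' p n (tiltf k x y z) = 0 := by
  have : leftMul n (tiltf k x y z p) = 0 := by
    change p2 (n * (Ba k x y p * z.1)) = 0
    rw [← mul_assoc, N_a hn, zero_mul, p2_zero]
  simp [mC', this]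

/-- The endomorphism of `T` killing `P₂` and acting on `coker f` through `mC'`; it is well defined
since `N α_p = 0`. -/
def mC (p : Fin x) {n : BAlgebra k x y} (hn : n ∈ N k x y) : EndT k x y :=
  LinearMap.prodMap (Submodule.mapQ _ _ (mC' p n) (by
    rintro _ ⟨z, rfl⟩
    rw [Submodule.mem_comap, mC'_tiltf p hn]
    exact zero_mem _)) (0 : P2 k x y →ₗ[(BAlgebra k x y)ᵐᵒᵖ] P2 k x y)

lemma mP_comb {n : BAlgebra k x y} (hn : n ∈ N k x y) (r : Fin x → BAlgebra k x y)
    (s : BAlgebra k x y) : mP n (comb r s) = comb 0 (n * s) := by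
  refine Prod.ext ?_ (Subtype.ext ?_)
  · have : (LinearMap.range (tiltf k x y)).mkQ (fun _ => p2 (0 : BAlgebra k x y)) = 0 := by
      simp only [p2_zero]
      exact map_zero _
    exact this.symm
  · change Be2 k x y * (n * (Be2 k x y * s)) = Be2 k x y * (n * s)
    have := N_mul_corner (zero_mem _) hn 1
    rw [one_smul, one_smul, add_zero] at this
    rw [← mul_assoc n, this]

lemma mC_comb (p : Fin x) {n : BAlgebra k x y} (hn : n ∈ N k x y) (r : Fin x → BAlgebra k x y)
    (s : BAlgebra k x y) : mC p hn (comb r s) = comb (Pi.single p (n * r p)) 0 := by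
  refine Prod.ext ?_ p2_zero.symm
  change (LinearMap.range (tiltf k x y)).mkQ (mC' p n fun j => p2 (r j)) =
    (LinearMap.range (tiltf k x y)).mkQ _
  congr 1
  funext i
  by_cases h : i = p
  · subst h
    refine Subtype.ext ?_
    simp only [mC', LinearMap.comp_apply, LinearMap.proj_apply, LinearMap.single_apply,
      Pi.single_eq_same]
    change Be2 k x y * (n * (Be2 k x y * r i)) = Be2 k x y * (n * r i)
    have := N_mul_corner (zero_mem _) hn 1
    rw [one_smul, one_smul, add_zero] at this
    rw [← mul_assoc n, this]
  · simp [mC', h, p2_zero]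

/-- The endomorphisms `mP n` generate square-zero ideals. -/
lemma mP_mul_mul (p : Fin x) (q : Fin y) (φ : EndT k x y) :
    mP (Ba k x y p * Bb k x y q) * φ * mP (Ba k x y p * Bb k x y q) = 0 := by
  ext t
  obtain ⟨r, s, rfl⟩ := comb_surj t
  rw [Module.End.mul_apply, Module.End.mul_apply, mP_comb (ab_mem_N p q), map_comb]
  obtain ⟨r', s', h⟩ := comb_surj (φ (π₀ k x y))
  have hz : Ba k x y p * Bb k x y q * (s' * (Ba k x y p * Bb k x y q * s)) = 0 := by
    have : Ba k x y p * Bb k x y q * (s' * (Ba k x y p * Bb k x y q * s)) =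
        Ba k x y p * (Bb k x y q * s' * Ba k x y p) * (Bb k x y q * s) := by
      simp only [mul_assoc]
    rw [this, b_mul_a, mul_zero, zero_mul]
  simp only [Pi.zero_apply, op_zero, zero_smul, Finset.sum_const_zero, zero_add]
  rw [h, comb_smul, mP_comb (ab_mem_N p q), hz, comb_zero]
  rfl

/-- The endomorphisms `mC p n` generate square-zero ideals. -/
lemma mC_mul_mul (p : Fin x) (q : Fin y) (φ : EndT k x y) :
    mC p (ab_mem_N p q) * φ * mC p (ab_mem_N p q) = 0 := by
  ext t
  obtain ⟨r, s, rfl⟩ := comb_surj t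
  rw [Module.End.mul_apply, Module.End.mul_apply, mC_comb, map_comb]
  obtain ⟨r', s', h⟩ := comb_surj (φ (γ p))
  have hz : Ba k x y p * Bb k x y q * (r' p * (Ba k x y p * Bb k x y q * r p)) = 0 := by
    have : Ba k x y p * Bb k x y q * (r' p * (Ba k x y p * Bb k x y q * r p)) =
        Ba k x y p * (Bb k x y q * r' p * Ba k x y p) * (Bb k x y q * r p) := by
      simp only [mul_assoc]
    rw [this, b_mul_a, mul_zero, zero_mul]
  rw [Finset.sum_eq_single p (fun j _ hj => by simp [hj]) (by simp)]
  simp only [Pi.single_eq_same, op_zero, zero_smul, add_zero]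
  rw [h, comb_smul, mC_comb, hz, Pi.single_zero, comb_zero]
  rfl

/-! ### Idempotents of `End(T)` -/

/-- An endomorphism whose `P₂`-component is invertible modulo the radical satisfies
`φ mP φ ≠ 0`: its `P₂`-component is `d² α_p β_q`. -/
lemma mP_corner_ne_zero (p : Fin x) (q : Fin y) {φ : EndT k x y} {r : Fin x → BAlgebra k x y}
    {d : k} {m : BAlgebra k x y} (hm : m ∈ N k x y) (hd : d ≠ 0)
    (h : φ (π₀ k x y) = comb r (d • Be2 k x y + m)) :
    φ * mP (Ba k x y p * Bb k x y q) * φ ≠ 0 := by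
  intro h0
  have h1 := congrArg (fun ψ : EndT k x y => ψ (π₀ k x y)) h0
  have hN := ab_mem_N (k := k) p q
  simp only [Module.End.mul_apply] at h1
  rw [h, mP_comb hN, map_comb, N_mul_corner hm hN] at h1
  simp only [Pi.zero_apply, op_zero, zero_smul, Finset.sum_const_zero, zero_add] at h1
  rw [h, comb_smul, mul_smul_comm, corner_mul_N hm hN] at h1
  have h2 := comb_snd (h1.trans comb_zero.symm)
  rw [mul_smul_comm, mul_smul_comm, e2_N hN, mul_zero] at h2
  simp [hd, ab_ne_zero] at h2

/-- An endomorphism whose `coker f`-component is invertible modulo the radical satisfies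
`φ mC φ ≠ 0`: `γ_p` is sent to `μ² γ_p α_p β_q` in `coker f`, and this is nonzero because `x ≥ 2`. -/
lemma mC_corner_ne_zero {p p' : Fin x} (hp : p' ≠ p) (q : Fin y) {φ : EndT k x y} {μ : k}
    {n : Fin x → BAlgebra k x y} {s : BAlgebra k x y} (hn : ∀ i, n i ∈ N k x y) (hμ : μ ≠ 0)
    (h : φ (γ p) = comb (fun i => (if i = p then μ else 0) • Be2 k x y + n i) s) :
    φ * mC p (ab_mem_N p q) * φ ≠ 0 := by
  intro h0
  have h1 := congrArg (fun ψ : EndT k x y => ψ (γ p)) h0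
  have hN := ab_mem_N (k := k) p q
  simp only [Module.End.mul_apply] at h1
  rw [h, mC_comb, map_comb, N_mul_corner (hn p) hN,
    Finset.sum_eq_single p (fun j _ hj => by simp [hj]) (by simp)] at h1
  simp only [Pi.single_eq_same, op_zero, zero_smul, add_zero, if_true] at h1
  rw [h, comb_smul] at h1
  simp only [mul_smul_comm, corner_mul_N (hn _) hN] at h1
  obtain ⟨z, hz⟩ := comb_fst h1
  simp only [mul_smul_comm, e2_N hN] at hz
  have hz1 := hz p
  have hz2 := hz p'
  rw [if_pos rfl, smul_smul] at hz1
  rw [if_neg hp, zero_smul, smul_zero] at hz2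
  exact mul_ne_zero hμ hμ (eq_zero_of_a_mul hz1 hz2)

/-- An idempotent endomorphism that is strictly triangular modulo the radical vanishes. -/
lemma eq_zero_of_idempotent {φ : EndT k x y} (hφ : φ * φ = φ)
    {n : Fin x → Fin x → BAlgebra k x y} {m : Fin x → BAlgebra k x y}
    (hn : ∀ j i, n j i ∈ N k x y) (hm : ∀ j, m j ∈ N k x y)
    (hγ : ∀ j, φ (γ j) = comb (n j) (m j))
    {c : Fin x → k} {n' : Fin x → BAlgebra k x y} {m' : BAlgebra k x y}
    (hm' : m' ∈ N k x y)
    (hπ : φ (π₀ k x y) = comb (fun j => c j • Be2 k x y + n' j) m') : φ = 0 := by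
  have idem : ∀ t, φ (φ t) = φ t := fun t => by rw [← Module.End.mul_apply, hφ]
  -- Radical elements of `coker f` are killed, since `N` has square zero.
  have kill : ∀ (u : Fin x → BAlgebra k x y), (∀ i, u i ∈ N k x y) →
      ∑ j, op (u j) • φ (γ j) = 0 := by
    intro u hu
    refine Finset.sum_eq_zero fun j _ => ?_
    rw [hγ, comb_smul, N_mul_N (hm j) (hu j)]
    simp only [N_mul_N (hn j _) (hu j)]
    exact comb_zero
  have hγ0 : ∀ j, φ (γ j) = 0 := by
    intro j
    have h1 := idem (γ j)
    rw [hγ j, map_comb, kill _ (hn j), zero_add, hπ, comb_smul, N_mul_N hm' (hm j)] at h1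
    have h2 := comb_snd h1
    rw [e2_N (hm j), mul_zero] at h2
    rw [← h2] at h1
    simp only [mul_zero] at h1
    rw [hγ j, ← h2, ← h1]
    exact comb_zero
  have hπ0 : φ (π₀ k x y) = 0 := by
    have h1 := idem (π₀ k x y)
    rw [hπ, map_comb] at h1
    simp only [hγ0, smul_zero, Finset.sum_const_zero, zero_add] at h1
    rw [hπ, comb_smul, N_mul_N hm' hm'] at h1
    have h2 := comb_snd h1
    rw [e2_N hm', mul_zero] at h2
    rw [← h2] at h1
    simp only [mul_zero] at h1
    rw [hπ, ← h2, ← h1]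
    exact comb_zero
  exact ext_gen (by simp [hγ0]) (by simp [hπ0])

lemma hasSquareZeroCorners (hx : 2 ≤ x) (hy : 1 ≤ y) : HasSquareZeroCorners (EndT k x y) := by
  let p : Fin x := ⟨0, by omega⟩
  let p' : Fin x := ⟨1, by omega⟩
  let q : Fin y := ⟨0, by omega⟩
  have hp : p' ≠ p := by simp [p, p', Fin.ext_iff]
  intro e he h0
  suffices ∃ m : EndT k x y, (∀ z, m * z * m = 0) ∧ e * m * e ≠ 0 by
    obtain ⟨m, hm, hne⟩ := this
    refine ⟨e * m * e, by simp only [← mul_assoc, he], by rw [mul_assoc, he], hne, fun z => ?_⟩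
    calc e * m * e * z * (e * m * e) = e * (m * (e * z * e) * m) * e := by simp only [mul_assoc]
      _ = 0 := by rw [hm, mul_zero, zero_mul]
  obtain ⟨c, n', d, m', -, hm', hπ⟩ := map_π₀ e
  obtain ⟨μ, n, m, hn, hm, hγ⟩ := map_γ e
  by_cases hd : d = 0
  · by_cases hμ : μ = 0
    · subst hd hμ
      simp only [ite_self, zero_smul, zero_add] at hγ hπ
      exact absurd (eq_zero_of_idempotent he hn hm hγ hm' hπ) h0
    · exact ⟨mC p (ab_mem_N p q), mC_mul_mul p q, mC_corner_ne_zero hp q (hn p) hμ (hγ p)⟩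
  · exact ⟨mP (Ba k x y p * Bb k x y q), mP_mul_mul p q, mP_corner_ne_zero p q hm' hd hπ⟩

lemma nontrivial_EndT (hx : 2 ≤ x) (hy : 1 ≤ y) : Nontrivial (EndT k x y) := by
  refine ⟨⟨1, 0, fun h => ?_⟩⟩
  have h1 := comb_snd ((congrArg (fun ψ : EndT k x y => ψ (π₀ k x y)) h).trans comb_zero.symm)
  rw [mul_one, mul_zero] at h1
  apply ab_ne_zero (k := k) (⟨0, by omega⟩ : Fin x) (⟨0, by omega⟩ : Fin y)
  rw [← e2_a, h1, zero_mul, zero_mul]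

end TiltingT

/-- the endomorphism algebra `E = End_{B(x,y)}(T)` of the tilting module
`T = coker(f) ⊕ P₂` is not a quasi-hereditary algebra (`x ≥ 2`, `y ≥ 1`). -/
theorem End_TiltingT_not_quasiHereditary (k : Type) [Field k] (x y : ℕ)
    (hx : 2 ≤ x) (hy : 1 ≤ y) :
    ¬ IsQuasiHereditary (Module.End (BAlgebra k x y)ᵐᵒᵖ (TiltingT k x y)) := by
  have := TiltingT.nontrivial_EndT (k := k) hx hy
  exact not_isQuasiHereditary (TiltingT.hasSquareZeroCorners hx hy)

end
end
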